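/- arXiv:1601.07979 — 3 statements merged into one kernel-verified Lean document; each statement's English description precedes it below -/
import Mathlib

section
/- Let (A, α_A) be a finite-dimensional Hom-algebra over a field k. Then the dual space A* equipped with the structure map ᾱ(f) = f∘α_A^{-1}, the counit ε̄(f) = f(1_A), and the comultiplication Δ̄(f) = f_[1]⊗f_[2], where f_[1]⊗f_[2] is the unique element of A*⊗A* satisfying f_[1](x) f_[2](y) = f(α_A^{-2}(yx)) for all x,y ∈ A, is a Hom-coalgebra over k (denoted A*^cop). -/
open TensorProduct BigOperators

noncomputable section

variable (k : Type*) [Field k]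

section HomDefs

variable {A B C H U X Y Z : Type*}
variable [AddCommGroup A] [Module k A] [AddCommGroup B] [Module k B]
variable [AddCommGroup C] [Module k C] [AddCommGroup H] [Module k H]
variable [AddCommGroup U] [Module k U] [AddCommGroup X] [Module k X]
variable [AddCommGroup Y] [Module k Y] [AddCommGroup Z] [Module k Z]

/-- A Hom-algebra `(A, α, μ, e)` over `k`. -/
def IsHomAlgebra (α : A ≃ₗ[k] A) (μ : A →ₗ[k] A →ₗ[k] A) (e : A) : Prop :=
  (∀ a b, α (μ a b) = μ (α a) (α b)) ∧
  (∀ a b c, μ (α a) (μ b c) = μ (μ a b) (α c)) ∧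
  α e = e ∧ (∀ a, μ e a = α a) ∧ (∀ a, μ a e = α a)

/-- A Hom-coalgebra `(C, α, Δ, ε)` over `k`. -/
def IsHomCoalgebra (α : C ≃ₗ[k] C) (Δ : C →ₗ[k] C ⊗[k] C) (ε : C →ₗ[k] k) : Prop :=
  (∀ c, Δ (α c) = TensorProduct.map α.toLinearMap α.toLinearMap (Δ c)) ∧
  (∀ c, ε (α c) = ε c) ∧
  (∀ c, TensorProduct.map α.toLinearMap Δ (Δ c)
      = TensorProduct.assoc k C C C (TensorProduct.map Δ α.toLinearMap (Δ c))) ∧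
  (∀ c, TensorProduct.lid k C (TensorProduct.map ε (LinearMap.id : C →ₗ[k] C) (Δ c)) = α c) ∧
  (∀ c, TensorProduct.rid k C (TensorProduct.map (LinearMap.id : C →ₗ[k] C) ε (Δ c)) = α c)

/-- A Hom-bialgebra `(H, α, μ, e, Δ, ε)` over `k`. -/
def IsHomBialgebra (α : H ≃ₗ[k] H) (μ : H →ₗ[k] H →ₗ[k] H) (e : H)
    (Δ : H →ₗ[k] H ⊗[k] H) (ε : H →ₗ[k] k) : Prop :=
  IsHomAlgebra k α μ e ∧ IsHomCoalgebra k α Δ ε ∧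
  (∀ a b, Δ (μ a b) = TensorProduct.map (TensorProduct.lift μ) (TensorProduct.lift μ)
      (TensorProduct.tensorTensorTensorComm k H H H H (Δ a ⊗ₜ[k] Δ b))) ∧
  Δ e = e ⊗ₜ[k] e ∧
  (∀ a b, ε (μ a b) = ε a * ε b) ∧
  ε e = 1

/-- A right `A`-Hom-module `(U, αU, act)`. -/
def IsHomModule (αA : A ≃ₗ[k] A) (μ : A →ₗ[k] A →ₗ[k] A) (e : A)
    (αU : U ≃ₗ[k] U) (act : U →ₗ[k] A →ₗ[k] U) : Prop :=
  (∀ u a, αU (act u a) = act (αU u) (αA a)) ∧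
  (∀ u, act u e = αU u) ∧
  (∀ u a b, act (act u a) (αA b) = act (αU u) (μ a b))

/-- A right `H`-Hom-comodule `(U, αU, ρ)`. -/
def IsHomComodule (αH : H ≃ₗ[k] H) (Δ : H →ₗ[k] H ⊗[k] H) (ε : H →ₗ[k] k)
    (αU : U ≃ₗ[k] U) (ρ : U →ₗ[k] U ⊗[k] H) : Prop :=
  (∀ u, ρ (αU u) = TensorProduct.map αU.toLinearMap αH.toLinearMap (ρ u)) ∧
  (∀ u, TensorProduct.map αU.toLinearMap Δ (ρ u)
      = TensorProduct.assoc k U H H (TensorProduct.map ρ αH.toLinearMap (ρ u))) ∧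
  (∀ u, TensorProduct.rid k U (TensorProduct.map (LinearMap.id : U →ₗ[k] U) ε (ρ u)) = αU u)

/-- A Hom-cotwistor `φ : B ⊗ H → H ⊗ B` between Hom-coalgebras `B` and `H`
(conditions (M1)-(M4) together with compatibility with the structure maps). -/
def IsHomCotwistor (αB : B ≃ₗ[k] B) (ΔB : B →ₗ[k] B ⊗[k] B) (εB : B →ₗ[k] k)
    (αH : H ≃ₗ[k] H) (ΔH : H →ₗ[k] H ⊗[k] H) (εH : H →ₗ[k] k)
    (φ : B ⊗[k] H →ₗ[k] H ⊗[k] B) : Prop :=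
  (φ ∘ₗ TensorProduct.map αB.toLinearMap αH.toLinearMap
     = TensorProduct.map αH.toLinearMap αB.toLinearMap ∘ₗ φ) ∧
  -- (M1)
  (TensorProduct.map αH.toLinearMap ΔB ∘ₗ φ
     = (TensorProduct.assoc k H B B).toLinearMap
       ∘ₗ TensorProduct.map φ (LinearMap.id : B →ₗ[k] B)
       ∘ₗ (TensorProduct.assoc k B H B).symm.toLinearMap
       ∘ₗ TensorProduct.map (LinearMap.id : B →ₗ[k] B) φ
       ∘ₗ (TensorProduct.assoc k B B H).toLinearMap
       ∘ₗ TensorProduct.map ΔB αH.toLinearMap) ∧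
  -- (M2)
  (TensorProduct.map ΔH αB.toLinearMap ∘ₗ φ
     = (TensorProduct.assoc k H H B).symm.toLinearMap
       ∘ₗ TensorProduct.map (LinearMap.id : H →ₗ[k] H) φ
       ∘ₗ (TensorProduct.assoc k H B H).toLinearMap
       ∘ₗ TensorProduct.map φ (LinearMap.id : H →ₗ[k] H)
       ∘ₗ (TensorProduct.assoc k B H H).symm.toLinearMap
       ∘ₗ TensorProduct.map αB.toLinearMap ΔH) ∧
  -- (M3)
  ((TensorProduct.lid k B).toLinearMap
      ∘ₗ TensorProduct.map εH (LinearMap.id : B →ₗ[k] B) ∘ₗ φ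
     = (TensorProduct.rid k B).toLinearMap
        ∘ₗ TensorProduct.map (LinearMap.id : B →ₗ[k] B) εH) ∧
  -- (M4)
  ((TensorProduct.rid k H).toLinearMap
      ∘ₗ TensorProduct.map (LinearMap.id : H →ₗ[k] H) εB ∘ₗ φ
     = (TensorProduct.lid k H).toLinearMap
        ∘ₗ TensorProduct.map εB (LinearMap.id : H →ₗ[k] H))

/-- A monoidal Hom-cotwistor between Hom-bialgebras `B` and `H`:
a Hom-cotwistor additionally satisfying (M5) and (M6). -/
def IsMonoidalHomCotwistor (αB : B ≃ₗ[k] B) (μB : B →ₗ[k] B →ₗ[k] B) (eB : B)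
    (ΔB : B →ₗ[k] B ⊗[k] B) (εB : B →ₗ[k] k)
    (αH : H ≃ₗ[k] H) (μH : H →ₗ[k] H →ₗ[k] H) (eH : H)
    (ΔH : H →ₗ[k] H ⊗[k] H) (εH : H →ₗ[k] k)
    (φ : B ⊗[k] H →ₗ[k] H ⊗[k] B) : Prop :=
  IsHomCotwistor k αB ΔB εB αH ΔH εH φ ∧
  -- (M5)
  (TensorProduct.map (TensorProduct.lift μH) (TensorProduct.lift μB)
      ∘ₗ (TensorProduct.tensorTensorTensorComm k H B H B).toLinearMap
      ∘ₗ TensorProduct.map φ φ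
    = φ ∘ₗ TensorProduct.map (TensorProduct.lift μB) (TensorProduct.lift μH)
        ∘ₗ (TensorProduct.tensorTensorTensorComm k B H B H).toLinearMap) ∧
  -- (M6)
  φ (eB ⊗ₜ[k] eH) = eH ⊗ₜ[k] eB

/-- A Hom-entwining map `Φ : H ⊗ A → A ⊗ H` (conditions (E1)-(E4) together
with compatibility with the structure maps); `(H, A, Φ)` is then a
Hom-entwining structure. -/
def IsHomEntwining (αA : A ≃ₗ[k] A) (μ : A →ₗ[k] A →ₗ[k] A) (e : A)
    (αH : H ≃ₗ[k] H) (Δ : H →ₗ[k] H ⊗[k] H) (ε : H →ₗ[k] k)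
    (Φ : H ⊗[k] A →ₗ[k] A ⊗[k] H) : Prop :=
  (TensorProduct.map αA.toLinearMap αH.toLinearMap ∘ₗ Φ
     = Φ ∘ₗ TensorProduct.map αH.toLinearMap αA.toLinearMap) ∧
  -- (E1)
  (TensorProduct.map (TensorProduct.lift μ) αH.toLinearMap
      ∘ₗ (TensorProduct.assoc k A A H).symm.toLinearMap
      ∘ₗ TensorProduct.map (LinearMap.id : A →ₗ[k] A) Φ
      ∘ₗ (TensorProduct.assoc k A H A).toLinearMap
      ∘ₗ TensorProduct.map Φ (LinearMap.id : A →ₗ[k] A)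
    = Φ ∘ₗ TensorProduct.map αH.toLinearMap (TensorProduct.lift μ)
        ∘ₗ (TensorProduct.assoc k H A A).toLinearMap) ∧
  -- (E2)
  (TensorProduct.map αA.toLinearMap Δ ∘ₗ Φ
     = (TensorProduct.assoc k A H H).toLinearMap
       ∘ₗ TensorProduct.map Φ (LinearMap.id : H →ₗ[k] H)
       ∘ₗ (TensorProduct.assoc k H A H).symm.toLinearMap
       ∘ₗ TensorProduct.map (LinearMap.id : H →ₗ[k] H) Φ
       ∘ₗ (TensorProduct.assoc k H H A).toLinearMap
       ∘ₗ TensorProduct.map Δ αA.toLinearMap) ∧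
  -- (E3)
  ((TensorProduct.rid k A).toLinearMap
      ∘ₗ TensorProduct.map (LinearMap.id : A →ₗ[k] A) ε ∘ₗ Φ
     = (TensorProduct.lid k A).toLinearMap
        ∘ₗ TensorProduct.map ε (LinearMap.id : A →ₗ[k] A)) ∧
  -- (E4)
  (∀ h, Φ (h ⊗ₜ[k] e) = e ⊗ₜ[k] h)

/-- A Hom-monoidal entwining datum between Hom-bialgebras `H` (coalgebra side)
and `A` (algebra side): a Hom-entwining map additionally satisfying (E5), (E6). -/
def IsHomMonoidalEntwining (αA : A ≃ₗ[k] A) (μA : A →ₗ[k] A →ₗ[k] A) (eA : A)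
    (ΔA : A →ₗ[k] A ⊗[k] A) (εA : A →ₗ[k] k)
    (αH : H ≃ₗ[k] H) (μH : H →ₗ[k] H →ₗ[k] H) (eH : H)
    (ΔH : H →ₗ[k] H ⊗[k] H) (εH : H →ₗ[k] k)
    (Φ : H ⊗[k] A →ₗ[k] A ⊗[k] H) : Prop :=
  IsHomEntwining k αA μA eA αH ΔH εH Φ ∧
  -- (E5)
  (TensorProduct.map (LinearMap.id : A ⊗[k] A →ₗ[k] A ⊗[k] A) (TensorProduct.lift μH)
      ∘ₗ (TensorProduct.tensorTensorTensorComm k A H A H).toLinearMap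
      ∘ₗ TensorProduct.map Φ Φ
      ∘ₗ (TensorProduct.tensorTensorTensorComm k H H A A).toLinearMap
      ∘ₗ TensorProduct.map
           (TensorProduct.map (αH.toLinearMap ∘ₗ αH.toLinearMap)
             (αH.toLinearMap ∘ₗ αH.toLinearMap)) ΔA
    = TensorProduct.map ΔA (αH.toLinearMap ∘ₗ αH.toLinearMap)
        ∘ₗ Φ ∘ₗ TensorProduct.map (TensorProduct.lift μH) (LinearMap.id : A →ₗ[k] A)) ∧
  -- (E6)
  (∀ a, TensorProduct.lid k H
      (TensorProduct.map εA (LinearMap.id : H →ₗ[k] H) (Φ (eH ⊗ₜ[k] a))) = εA a • eH)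

/-- An `n`-th Hom-entwined module over a Hom-entwining structure `(H, A, Φ)`. -/
def IsHomEntwinedModule (αA : A ≃ₗ[k] A) (μ : A →ₗ[k] A →ₗ[k] A) (e : A)
    (αH : H ≃ₗ[k] H) (Δ : H →ₗ[k] H ⊗[k] H) (ε : H →ₗ[k] k)
    (Φ : H ⊗[k] A →ₗ[k] A ⊗[k] H) (n : ℤ)
    (αU : U ≃ₗ[k] U) (act : U →ₗ[k] A →ₗ[k] U) (ρ : U →ₗ[k] U ⊗[k] H) : Prop :=
  IsHomModule k αA μ e αU act ∧
  IsHomComodule k αH Δ ε αU ρ ∧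
  ∀ u a, ρ (act u a)
    = TensorProduct.map
        (TensorProduct.lift act ∘ₗ
          TensorProduct.map (LinearMap.id : U →ₗ[k] U) αA.toLinearMap)
        ((αH ^ (-n)).toLinearMap)
        ((TensorProduct.assoc k U A H).symm
          (TensorProduct.map (LinearMap.id : U →ₗ[k] U)
            (Φ ∘ₗ TensorProduct.map ((αH ^ (n + 1)).toLinearMap)
               (LinearMap.id : A →ₗ[k] A))
            (TensorProduct.assoc k U H A (ρ u ⊗ₜ[k] a))))

/-- A Hom-Long dimodule over a Hom-bialgebra `H`. -/
def IsHomLongDimodule (αH : H ≃ₗ[k] H) (μ : H →ₗ[k] H →ₗ[k] H) (e : H)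
    (Δ : H →ₗ[k] H ⊗[k] H) (ε : H →ₗ[k] k)
    (αU : U ≃ₗ[k] U) (act : U →ₗ[k] H →ₗ[k] U) (ρ : U →ₗ[k] U ⊗[k] H) : Prop :=
  IsHomModule k αH μ e αU act ∧
  IsHomComodule k αH Δ ε αU ρ ∧
  ∀ u h, ρ (act u h)
    = TensorProduct.map (TensorProduct.lift act) αH.toLinearMap
        ((TensorProduct.assoc k U H H).symm
          (TensorProduct.map (LinearMap.id : U →ₗ[k] U)
            (TensorProduct.comm k H H).toLinearMap
            (TensorProduct.assoc k U H H (ρ u ⊗ₜ[k] αH h))))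

/-- A right `H`-comodule algebra over a Hom-bialgebra `H`. -/
def IsHomComoduleAlgebra (αH : H ≃ₗ[k] H) (μH : H →ₗ[k] H →ₗ[k] H) (eH : H)
    (ΔH : H →ₗ[k] H ⊗[k] H) (εH : H →ₗ[k] k)
    (αA : A ≃ₗ[k] A) (μA : A →ₗ[k] A →ₗ[k] A) (eA : A)
    (ρA : A →ₗ[k] A ⊗[k] H) : Prop :=
  IsHomAlgebra k αA μA eA ∧
  IsHomComodule k αH ΔH εH αA ρA ∧
  (∀ a b, ρA (μA a b) = TensorProduct.map (TensorProduct.lift μA) (TensorProduct.lift μH)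
      (TensorProduct.tensorTensorTensorComm k A H A H (ρA a ⊗ₜ[k] ρA b))) ∧
  ρA eA = eA ⊗ₜ[k] eH

/-- A right `H`-module coalgebra over a Hom-bialgebra `H`. -/
def IsHomModuleCoalgebra (αH : H ≃ₗ[k] H) (μH : H →ₗ[k] H →ₗ[k] H) (eH : H)
    (ΔH : H →ₗ[k] H ⊗[k] H) (εH : H →ₗ[k] k)
    (αC : C ≃ₗ[k] C) (ΔC : C →ₗ[k] C ⊗[k] C) (εC : C →ₗ[k] k)
    (act : C →ₗ[k] H →ₗ[k] C) : Prop :=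
  IsHomCoalgebra k αC ΔC εC ∧
  IsHomModule k αH μH eH αC act ∧
  (∀ c h, ΔC (act c h) = TensorProduct.map (TensorProduct.lift act) (TensorProduct.lift act)
      (TensorProduct.tensorTensorTensorComm k C C H H (ΔC c ⊗ₜ[k] ΔH h))) ∧
  (∀ c h, εC (act c h) = εC c * εH h)

/-- A Hom-Hopf algebra `(H, α, μ, e, Δ, ε, S)` over `k`. -/
def IsHomHopf (αH : H ≃ₗ[k] H) (μ : H →ₗ[k] H →ₗ[k] H) (e : H)
    (Δ : H →ₗ[k] H ⊗[k] H) (ε : H →ₗ[k] k) (S : H →ₗ[k] H) : Prop :=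
  IsHomBialgebra k αH μ e Δ ε ∧
  (∀ h, S (αH h) = αH (S h)) ∧
  (∀ h, TensorProduct.lift μ
      (TensorProduct.map S (LinearMap.id : H →ₗ[k] H) (Δ h)) = ε h • e) ∧
  (∀ h, TensorProduct.lift μ
      (TensorProduct.map (LinearMap.id : H →ₗ[k] H) S (Δ h)) = ε h • e)

/-- A `p`-th right-right Yetter-Drinfeld module over a Hom-Hopf algebra `H`. -/
def IsYetterDrinfeld (αH : H ≃ₗ[k] H) (μ : H →ₗ[k] H →ₗ[k] H) (e : H)
    (Δ : H →ₗ[k] H ⊗[k] H) (ε : H →ₗ[k] k) (S : H →ₗ[k] H) (p : ℤ)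
    (αU : U ≃ₗ[k] U) (act : U →ₗ[k] H →ₗ[k] U) (ρ : U →ₗ[k] U ⊗[k] H) : Prop :=
  IsHomModule k αH μ e αU act ∧
  IsHomComodule k αH Δ ε αU ρ ∧
  ∀ u h, ρ (act u h)
    = TensorProduct.map
        (TensorProduct.lift act ∘ₗ
          TensorProduct.map (LinearMap.id : U →ₗ[k] U) αH.symm.toLinearMap)
        (TensorProduct.lift μ ∘ₗ
          TensorProduct.map (S ∘ₗ (αH ^ (p - 2)).toLinearMap)
            (TensorProduct.lift μ ∘ₗ
              TensorProduct.map αH.symm.toLinearMap ((αH ^ (p - 4)).toLinearMap)))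
        (TensorProduct.tensorTensorTensorComm k U H H (H ⊗[k] H)
          (TensorProduct.map (LinearMap.id : U ⊗[k] H →ₗ[k] U ⊗[k] H)
            (TensorProduct.leftComm k H H H).toLinearMap
            (TensorProduct.tensorTensorTensorComm k U H H (H ⊗[k] H)
              (ρ u ⊗ₜ[k]
                TensorProduct.map (LinearMap.id : H →ₗ[k] H) Δ (Δ h)))))

/-- The smash coproduct comultiplication on `B ⊗ H` induced by
`φ : B ⊗ H → H ⊗ B`: `Δ(b ⊗ h) = (b₁ ⊗ (h₁)^φ) ⊗ ((b₂)^φ ⊗ h₂)`. -/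
def smashComul (φ : B ⊗[k] H →ₗ[k] H ⊗[k] B) (ΔB : B →ₗ[k] B ⊗[k] B)
    (ΔH : H →ₗ[k] H ⊗[k] H) : B ⊗[k] H →ₗ[k] (B ⊗[k] H) ⊗[k] (B ⊗[k] H) :=
  (TensorProduct.assoc k B H (B ⊗[k] H)).symm.toLinearMap
  ∘ₗ TensorProduct.map (LinearMap.id : B →ₗ[k] B)
       (TensorProduct.assoc k H B H).toLinearMap
  ∘ₗ TensorProduct.map (LinearMap.id : B →ₗ[k] B)
       (TensorProduct.map φ (LinearMap.id : H →ₗ[k] H))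
  ∘ₗ TensorProduct.map (LinearMap.id : B →ₗ[k] B)
       (TensorProduct.assoc k B H H).symm.toLinearMap
  ∘ₗ (TensorProduct.assoc k B B (H ⊗[k] H)).toLinearMap
  ∘ₗ TensorProduct.map ΔB ΔH

/-- The smash coproduct counit on `B ⊗ H`: `ε(b ⊗ h) = εB(b) εH(h)`. -/
def smashCounit (εB : B →ₗ[k] k) (εH : H →ₗ[k] k) : B ⊗[k] H →ₗ[k] k :=
  (TensorProduct.lid k k).toLinearMap ∘ₗ TensorProduct.map εB εH

/-- The componentwise product on `B ⊗ H`: `(a ⊗ h)(b ⊗ g) = ab ⊗ hg`. -/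
def smashMul (μB : B →ₗ[k] B →ₗ[k] B) (μH : H →ₗ[k] H →ₗ[k] H) :
    B ⊗[k] H →ₗ[k] B ⊗[k] H →ₗ[k] B ⊗[k] H :=
  (TensorProduct.mk k (B ⊗[k] H) (B ⊗[k] H)).compr₂
    (TensorProduct.map (TensorProduct.lift μB) (TensorProduct.lift μH)
      ∘ₗ (TensorProduct.tensorTensorTensorComm k B H B H).toLinearMap)

/-- Threefold "componentwise comultiplication" `(C⊗C)⊗C → ((C⊗C)⊗C) ⊗ ((C⊗C)⊗C)`
obtained by applying `Δ2` to each factor and pairing the first and second legs. -/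
def convDelta3 (Δ2 : C →ₗ[k] C ⊗[k] C) :
    (C ⊗[k] C) ⊗[k] C →ₗ[k] ((C ⊗[k] C) ⊗[k] C) ⊗[k] ((C ⊗[k] C) ⊗[k] C) :=
  (TensorProduct.tensorTensorTensorComm k (C ⊗[k] C) (C ⊗[k] C) C C).toLinearMap
  ∘ₗ TensorProduct.map (TensorProduct.tensorTensorTensorComm k C C C C).toLinearMap
       (LinearMap.id : C ⊗[k] C →ₗ[k] C ⊗[k] C)
  ∘ₗ TensorProduct.map (TensorProduct.map Δ2 Δ2) Δ2

/-- The map `ξ_{X,Y}(x ⊗ y) = α_X⁻¹(x)·α_H^m(y₍₁₎) ⊗ α_Y⁻¹(y₍₀₎)` for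
Hom-Long dimodules `X`, `Y`. -/
def longXi (m : ℤ) (αH : H ≃ₗ[k] H) (αX : X ≃ₗ[k] X) (αY : Y ≃ₗ[k] Y)
    (act : X →ₗ[k] H →ₗ[k] X) (ρ : Y →ₗ[k] Y ⊗[k] H) : X ⊗[k] Y →ₗ[k] X ⊗[k] Y :=
  TensorProduct.map
      (TensorProduct.lift act ∘ₗ
        TensorProduct.map (LinearMap.id : X →ₗ[k] X) ((αH ^ m).toLinearMap))
      αY.symm.toLinearMap
    ∘ₗ (TensorProduct.assoc k X H Y).symm.toLinearMap
    ∘ₗ TensorProduct.map (LinearMap.id : X →ₗ[k] X) (TensorProduct.comm k Y H).toLinearMap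
    ∘ₗ TensorProduct.map αX.symm.toLinearMap ρ

/-- The associativity constraint `a_{X,Y,Z}((x⊗y)⊗z) = α_X^{i+1}(x) ⊗ (y ⊗ α_Z^{-j-1}(z))`. -/
def homAssoc (i j : ℤ) (αX : X ≃ₗ[k] X) (αZ : Z ≃ₗ[k] Z) :
    (X ⊗[k] Y) ⊗[k] Z ≃ₗ[k] X ⊗[k] (Y ⊗[k] Z) :=
  (TensorProduct.assoc k X Y Z).trans
    (TensorProduct.congr (αX ^ (i + 1))
      (TensorProduct.congr (LinearEquiv.refl k Y) (αZ ^ (-j - 1))))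

/-- The braiding `τ_{X,Y}(x ⊗ y) = α_Y^{j-i-1}(y₍₀₎) ⊗ α_X^{i-j-1}(x)·α_H^{-p}(y₍₁₎)`
for Yetter-Drinfeld modules. -/
def ydTau (p i j : ℤ) (αH : H ≃ₗ[k] H) (αX : X ≃ₗ[k] X) (αY : Y ≃ₗ[k] Y)
    (act : X →ₗ[k] H →ₗ[k] X) (ρ : Y →ₗ[k] Y ⊗[k] H) : X ⊗[k] Y →ₗ[k] Y ⊗[k] X :=
  TensorProduct.map ((αY ^ (j - i - 1)).toLinearMap)
      (TensorProduct.lift act ∘ₗ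
        TensorProduct.map ((αX ^ (i - j - 1)).toLinearMap) ((αH ^ (-p)).toLinearMap))
    ∘ₗ (TensorProduct.leftComm k X Y H).toLinearMap
    ∘ₗ TensorProduct.map (LinearMap.id : X →ₗ[k] X) ρ

end HomDefs

/-!
Over a field the canonical map `M* ⊗ N* → (M ⊗ N)*` is injective, in every dimension: expanding the
second leg of an element of `M* ⊗ N*` in a basis of `N*`, its coefficients in `M*` are recovered
by evaluation. Hence each Hom-coalgebra identity for the transpose `A* → A* ⊗ A*` of a product on
`A` can be tested on elements of `A`, where it becomes a Hom-algebra identity for that product.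

The coproduct at hand is the transpose of `x ⊗ y ↦ α⁻²(yx)`. The opposite of a Hom-algebra is a
Hom-algebra, and twisting a product by `α⁻²` makes it a Hom-algebra for `α⁻¹` with the same unit.
-/

section DualDistrib

open Module

variable {R M N P Q : Type*} [CommSemiring R]
variable [AddCommMonoid M] [Module R M] [AddCommMonoid N] [Module R N]
variable [AddCommMonoid P] [Module R P] [AddCommMonoid Q] [Module R Q]

theorem dualTensorHom_injective [Module.Free R N] : Function.Injective (dualTensorHom R M N) := by
  classical
  intro s t hst
  let b := Module.Free.chooseBasis R N
  have coord_eq (w : Dual R M ⊗[R] N) (i) :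
      TensorProduct.equivFinsuppOfBasisRight b w i = b.coord i ∘ₗ dualTensorHom R M N w := by
    rw [TensorProduct.equivFinsuppOfBasisRight_apply, ← LinearEquiv.coe_coe,
      ← dualTensorHom_self_right]
    exact LinearMap.congr_fun (dualTensorHom_comp_lTensor (b.coord i)) w
  apply (TensorProduct.equivFinsuppOfBasisRight b).injective
  ext1 i
  rw [coord_eq, coord_eq, hst]

theorem dualDistrib_eq_uncurry_comp_dualTensorHom :
    dualDistrib R M N =
      (TensorProduct.lift.equiv (.id R) M N R).toLinearMap ∘ₗ dualTensorHom R M (Dual R N) := by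
  ext; simp

theorem dualDistrib_injective [Module.Free R (Dual R N)] :
    Function.Injective (dualDistrib R M N) := by
  rw [dualDistrib_eq_uncurry_comp_dualTensorHom]
  exact (TensorProduct.lift.equiv (.id R) M N R).injective.comp dualTensorHom_injective

theorem dualDistrib_map_dualMap (f : M →ₗ[R] P) (g : N →ₗ[R] Q) (w : Dual R P ⊗[R] Dual R Q) :
    dualDistrib R M N (TensorProduct.map f.dualMap g.dualMap w) =
      dualDistrib R P Q w ∘ₗ TensorProduct.map f g := by
  have natural : dualDistrib R M N ∘ₗ TensorProduct.map f.dualMap g.dualMap =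
      (TensorProduct.map f g).dualMap ∘ₗ dualDistrib R P Q := by
    ext; simp
  exact LinearMap.congr_fun natural w

theorem dualDistrib_lTensor_assoc (w : (Dual R M ⊗[R] Dual R N) ⊗[R] Dual R P) :
    dualDistrib R M (N ⊗[R] P)
        ((dualDistrib R N P).lTensor (Dual R M) (TensorProduct.assoc R _ _ _ w)) =
      dualDistrib R (M ⊗[R] N) P ((dualDistrib R M N).rTensor (Dual R P) w) ∘ₗ
        (TensorProduct.assoc R M N P).symm.toLinearMap := by
  have natural : dualDistrib R M (N ⊗[R] P) ∘ₗ (dualDistrib R N P).lTensor (Dual R M) ∘ₗ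
        (TensorProduct.assoc R (Dual R M) (Dual R N) (Dual R P)).toLinearMap =
      (TensorProduct.assoc R M N P).symm.toLinearMap.dualMap ∘ₗ
        dualDistrib R (M ⊗[R] N) P ∘ₗ (dualDistrib R M N).rTensor (Dual R P) := by
    ext; simp [mul_assoc]
  exact LinearMap.congr_fun natural w

theorem lid_map_eval_apply (w : Dual R M ⊗[R] Dual R N) (x : M) (y : N) :
    TensorProduct.lid R (Dual R N) (TensorProduct.map (Dual.eval R M x) LinearMap.id w) y =
      dualDistrib R M N w (x ⊗ₜ[R] y) := by
  induction w <;> simp_all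

theorem rid_map_eval_apply (w : Dual R M ⊗[R] Dual R N) (x : M) (y : N) :
    TensorProduct.rid R (Dual R M) (TensorProduct.map LinearMap.id (Dual.eval R N y) w) x =
      dualDistrib R M N w (x ⊗ₜ[R] y) := by
  induction w <;> simp_all [mul_comm]

section Transpose

variable {L : Type*} [AddCommMonoid L] [Module R L]
variable {Δ : Dual R N →ₗ[R] Dual R P ⊗[R] Dual R Q} {m : P ⊗[R] Q →ₗ[R] N}

theorem dualDistrib_lTensor_map_dualMap (hΔ : dualDistrib R P Q ∘ₗ Δ = m.dualMap)
    (f : L →ₗ[R] M) (w : Dual R M ⊗[R] Dual R N) :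
    dualDistrib R L (P ⊗[R] Q)
        ((dualDistrib R P Q).lTensor (Dual R L) (TensorProduct.map f.dualMap Δ w)) =
      dualDistrib R M N w ∘ₗ TensorProduct.map f m := by
  rw [LinearMap.lTensor_map, hΔ, dualDistrib_map_dualMap]

theorem dualDistrib_rTensor_map_dualMap (hΔ : dualDistrib R P Q ∘ₗ Δ = m.dualMap)
    (f : L →ₗ[R] M) (w : Dual R N ⊗[R] Dual R M) :
    dualDistrib R (P ⊗[R] Q) L
        ((dualDistrib R P Q).rTensor (Dual R L) (TensorProduct.map Δ f.dualMap w)) =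
      dualDistrib R N M w ∘ₗ TensorProduct.map m f := by
  rw [LinearMap.rTensor_map, hΔ, dualDistrib_map_dualMap]

end Transpose

end DualDistrib

section DualHomAlgebra

variable {k}
variable {A : Type*} [AddCommGroup A] [Module k A] {μ : A →ₗ[k] A →ₗ[k] A}

theorem dual_hom_coassoc_of_hom_assoc {α : A →ₗ[k] A}
    (hom_assoc : ∀ a b c, μ (α a) (μ b c) = μ (μ a b) (α c))
    {Δ : Module.Dual k A →ₗ[k] Module.Dual k A ⊗[k] Module.Dual k A}
    (hΔ : dualDistrib k A A ∘ₗ Δ = (TensorProduct.lift μ).dualMap) (f : Module.Dual k A) :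
    TensorProduct.map α.dualMap Δ (Δ f) =
      TensorProduct.assoc k _ _ _ (TensorProduct.map Δ α.dualMap (Δ f)) := by
  have dualDistrib_comul : dualDistrib k A A (Δ f) = f ∘ₗ TensorProduct.lift μ :=
    LinearMap.congr_fun hΔ f
  apply Module.Flat.lTensor_preserves_injective_linearMap _ dualDistrib_injective
  apply dualDistrib_injective
  rw [dualDistrib_lTensor_assoc, dualDistrib_lTensor_map_dualMap hΔ,
    dualDistrib_rTensor_map_dualMap hΔ, dualDistrib_comul]
  ext x y z
  simp [hom_assoc]

variable {α : A ≃ₗ[k] A} {e : A}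

theorem IsHomAlgebra.isHomCoalgebra_dual (hA : IsHomAlgebra k α μ e)
    {Δ : Module.Dual k A →ₗ[k] Module.Dual k A ⊗[k] Module.Dual k A}
    (hΔ : dualDistrib k A A ∘ₗ Δ = (TensorProduct.lift μ).dualMap) :
    IsHomCoalgebra k α.dualMap Δ (Module.Dual.eval k A e) := by
  obtain ⟨map_mul, hom_assoc, map_one, one_mul, mul_one⟩ := hA
  have dualDistrib_comul (f : Module.Dual k A) :
      dualDistrib k A A (Δ f) = f ∘ₗ TensorProduct.lift μ :=
    LinearMap.congr_fun hΔ f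
  refine ⟨fun f ↦ ?_, fun f ↦ ?_, dual_hom_coassoc_of_hom_assoc hom_assoc hΔ,
    fun f ↦ ?_, fun f ↦ ?_⟩
  · apply dualDistrib_injective
    refine .trans ?_ (dualDistrib_map_dualMap α.toLinearMap α.toLinearMap (Δ f)).symm
    rw [dualDistrib_comul, dualDistrib_comul]
    ext x y
    simp [map_mul]
  · simp [map_one]
  · ext y
    simp [lid_map_eval_apply, dualDistrib_comul, one_mul]
  · ext x
    simp [rid_map_eval_apply, dualDistrib_comul, mul_one]

theorem IsHomAlgebra.flip (hA : IsHomAlgebra k α μ e) : IsHomAlgebra k α μ.flip e := by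
  obtain ⟨map_mul, hom_assoc, map_one, one_mul, mul_one⟩ := hA
  exact ⟨fun a b ↦ map_mul b a, fun a b c ↦ (hom_assoc c b a).symm, map_one, mul_one, one_mul⟩

theorem IsHomAlgebra.symm (hA : IsHomAlgebra k α μ e) :
    IsHomAlgebra k α.symm (μ.compr₂ (α.symm.toLinearMap ∘ₗ α.symm.toLinearMap)) e := by
  obtain ⟨map_mul, hom_assoc, map_one, one_mul, mul_one⟩ := hA
  have symm_mul (a b : A) : α.symm (μ a b) = μ (α.symm a) (α.symm b) := by
    simp [LinearEquiv.symm_apply_eq, map_mul]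
  refine ⟨fun a b ↦ ?_, fun a b c ↦ ?_, ?_, fun a ↦ ?_, fun a ↦ ?_⟩
  · simp [symm_mul]
  · let β (x : A) := α.symm (α.symm (α.symm (α.symm x)))
    simpa [β, symm_mul] using hom_assoc (β a) (β b) (β c)
  · rw [LinearEquiv.symm_apply_eq, map_one]
  · simp [one_mul]
  · simp [mul_one]

end DualHomAlgebra

theorem dual_of_homAlgebra_isHomCoalgebra_general
    {A : Type*} [AddCommGroup A] [Module k A]
    (αA : A ≃ₗ[k] A) (μ : A →ₗ[k] A →ₗ[k] A) (e : A)
    (hA : IsHomAlgebra k αA μ e)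
    (Δbar : Module.Dual k A →ₗ[k] Module.Dual k A ⊗[k] Module.Dual k A)
    (hΔbar : ∀ (f : Module.Dual k A) (x y : A),
        TensorProduct.dualDistrib k A A (Δbar f) (x ⊗ₜ[k] y)
          = f (αA.symm (αA.symm (μ y x)))) :
    IsHomCoalgebra k αA.symm.dualMap Δbar (Module.Dual.eval k A e) := by
  apply hA.flip.symm.isHomCoalgebra_dual
  ext f x y
  simp [hΔbar]

/-- the dual of a finite-dimensional Hom-algebra is a Hom-coalgebra
(`A*^cop`). -/
theorem dual_of_homAlgebra_isHomCoalgebra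
    {A : Type*} [AddCommGroup A] [Module k A] [FiniteDimensional k A]
    (αA : A ≃ₗ[k] A) (μ : A →ₗ[k] A →ₗ[k] A) (e : A)
    (hA : IsHomAlgebra k αA μ e)
    (Δbar : Module.Dual k A →ₗ[k] Module.Dual k A ⊗[k] Module.Dual k A)
    (hΔbar : ∀ (f : Module.Dual k A) (x y : A),
        TensorProduct.dualDistrib k A A (Δbar f) (x ⊗ₜ[k] y)
          = f (αA.symm (αA.symm (μ y x)))) :
    IsHomCoalgebra k αA.symm.dualMap Δbar (Module.Dual.eval k A e) := by
  exact dual_of_homAlgebra_isHomCoalgebra_general k αA μ e hA Δbar hΔbar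
end
end

section
/- Let (A, α_A) be a finite-dimensional Hom-bialgebra over a field k. Then A*^cop, i.e. the dual space A* with structure map ᾱ(f) = f∘α_A^{-1}, counit ε̄(f) = f(1_A), comultiplication Δ̄(f) = f_[1]⊗f_[2] determined by f_[1](x) f_[2](y) = f(α_A^{-2}(yx)), together with the convolution product (f∗f')(y) = f(α_A^{-2}(y₁)) f'(α_A^{-2}(y₂)) and unit element ε_A, is a Hom-bialgebra over k. -/
open TensorProduct BigOperators

noncomputable section

variable (k : Type*) [Field k]

/-! If `(A, α, μ, e, Δ, ε)` is a Hom-bialgebra, then so is `(A, α⁻¹, α⁻² ∘ μᵒᵖ, e, Δ ∘ α⁻², ε)`, and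
`A*^cop` is the plain transpose of the latter. Transposing a Hom-bialgebra gives a Hom-bialgebra
because `V* ⊗ W* → (V ⊗ W)*` is injective, so that identities between elements of tensor powers of
`A*` can be tested on tensor powers of `A`. -/

section TensorProductPairings

section Semiring

variable {R M N M' N' P Q : Type*} [CommSemiring R]
variable [AddCommMonoid M] [Module R M] [AddCommMonoid N] [Module R N]
variable [AddCommMonoid M'] [Module R M'] [AddCommMonoid N'] [Module R N']
variable [AddCommMonoid P] [Module R P] [AddCommMonoid Q] [Module R Q]

theorem dualDistrib_map_dualMap_s1 (u : M →ₗ[R] M') (v : N →ₗ[R] N')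
    (t : Module.Dual R M' ⊗[R] Module.Dual R N') :
    dualDistrib R M N (map u.dualMap v.dualMap t) = dualDistrib R M' N' t ∘ₗ map u v := by
  induction t with
  | zero => simp
  | tmul f g => ext; simp
  | add s t hs ht => simp only [map_add, LinearMap.add_comp, hs, ht]

theorem dualDistrib_tmul_comp_map (u : M →ₗ[R] M') (v : N →ₗ[R] N')
    (f : Module.Dual R M') (g : Module.Dual R N') :
    dualDistrib R M' N' (f ⊗ₜ g) ∘ₗ map u v = dualDistrib R M N ((f ∘ₗ u) ⊗ₜ (g ∘ₗ v)) :=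
  (dualDistrib_map_dualMap_s1 u v (f ⊗ₜ g)).symm

theorem dualDistrib_tmul_eq_comp_lid (φ : Module.Dual R M) (g : Module.Dual R N) :
    dualDistrib R M N (φ ⊗ₜ g) = g ∘ₗ (TensorProduct.lid R N).toLinearMap ∘ₗ map φ .id := by
  ext; simp

theorem dualDistrib_tmul_eq_comp_rid (f : Module.Dual R M) (ψ : Module.Dual R N) :
    dualDistrib R M N (f ⊗ₜ ψ) = f ∘ₗ (TensorProduct.rid R M).toLinearMap ∘ₗ map .id ψ := by
  ext; simp [mul_comm]

theorem lid_map_eval_apply_s1 (x : M) (y : N) (t : Module.Dual R M ⊗[R] Module.Dual R N) :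
    TensorProduct.lid R _ (map (Module.Dual.eval R M x) .id t) y
      = dualDistrib R M N t (x ⊗ₜ y) := by
  induction t with
  | zero => simp
  | tmul f g => simp
  | add s t hs ht => simp only [map_add, LinearMap.add_apply, hs, ht]

theorem rid_map_eval_apply_s1 (x : M) (y : N) (t : Module.Dual R M ⊗[R] Module.Dual R N) :
    TensorProduct.rid R _ (map .id (Module.Dual.eval R N y) t) x
      = dualDistrib R M N t (x ⊗ₜ y) := by
  induction t with
  | zero => simp
  | tmul f g => simp [mul_comm]
  | add s t hs ht => simp only [map_add, LinearMap.add_apply, hs, ht]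

theorem dualDistrib_map_dualDistrib_assoc
    (t : (Module.Dual R M ⊗[R] Module.Dual R N) ⊗[R] Module.Dual R P) :
    dualDistrib R M (N ⊗[R] P) (map .id (dualDistrib R N P) (TensorProduct.assoc R _ _ _ t))
        ∘ₗ (TensorProduct.assoc R M N P).toLinearMap
      = dualDistrib R (M ⊗[R] N) P (map (dualDistrib R M N) .id t) := by
  induction t with
  | zero => simp
  | add s t hs ht => simp only [map_add, LinearMap.add_comp, hs, ht]
  | tmul s h =>
    induction s with
    | zero => simp
    | add s t hs ht => simp only [add_tmul, map_add, LinearMap.add_comp, hs, ht]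
    | tmul f g => ext; simp [mul_assoc]

theorem dualDistrib_map_dualDistrib_tensorTensorTensorComm
    (s : Module.Dual R M ⊗[R] Module.Dual R N) (t : Module.Dual R P ⊗[R] Module.Dual R Q) :
    dualDistrib R (M ⊗[R] P) (N ⊗[R] Q) (map (dualDistrib R M P) (dualDistrib R N Q)
        (tensorTensorTensorComm R _ _ _ _ (s ⊗ₜ t)))
      = dualDistrib R (M ⊗[R] N) (P ⊗[R] Q) (dualDistrib R M N s ⊗ₜ dualDistrib R P Q t)
          ∘ₗ (tensorTensorTensorComm R M P N Q).toLinearMap := by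
  induction s with
  | zero => simp
  | add s s' hs hs' => simp only [add_tmul, map_add, LinearMap.add_comp, hs, hs']
  | tmul f g =>
    induction t with
    | zero => simp
    | add t t' ht ht' => simp only [tmul_add, map_add, LinearMap.add_comp, ht, ht']
    | tmul f' g' => ext; simp [mul_mul_mul_comm]

theorem map_lift_flip_tensorTensorTensorComm (β : M →ₗ[R] N →ₗ[R] P) (γ : M' →ₗ[R] N' →ₗ[R] Q)
    (s : M ⊗[R] M') (t : N ⊗[R] N') :
    map (lift β.flip) (lift γ.flip) (tensorTensorTensorComm R N N' M M' (t ⊗ₜ s))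
      = map (lift β) (lift γ) (tensorTensorTensorComm R M M' N N' (s ⊗ₜ t)) := by
  induction s with
  | zero => simp
  | add s s' hs hs' => simp only [add_tmul, tmul_add, map_add, hs, hs']
  | tmul a b =>
    induction t with
    | zero => simp
    | add t t' ht ht' => simp only [add_tmul, tmul_add, map_add, ht, ht']
    | tmul c d => simp

end Semiring

section Field

variable {K V W U : Type*} [Field K] [AddCommGroup V] [Module K V] [AddCommGroup W] [Module K W]
variable [AddCommGroup U] [Module K U]

/- The coefficients of `t ∈ V* ⊗ W*` in a basis of `W*` are functionals on `V`, whose values at `x`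
are the coordinates of the functional `t(x, ·) ∈ W*`. -/
theorem dualDistrib_injective_s1 : Function.Injective (dualDistrib K V W) := by
  classical
  rw [injective_iff_map_eq_zero]
  intro t ht
  let b := Module.Basis.ofVectorSpace K (Module.Dual K W)
  have partialEval_eq_zero (x : V) :
      TensorProduct.lid K _ (map (Module.Dual.eval K V x) .id t) = 0 := by
    ext y
    rw [lid_map_eval_apply_s1, ht, LinearMap.zero_apply, LinearMap.zero_apply]
  have coeff_apply (i) (x : V) (s : Module.Dual K V ⊗[K] Module.Dual K W) :
      equivFinsuppOfBasisRight b s i x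
        = b.repr (TensorProduct.lid K _ (map (Module.Dual.eval K V x) .id s)) i := by
    induction s with
    | zero => simp
    | tmul f g => simp [mul_comm]
    | add s s' hs hs' => simp only [map_add, Finsupp.add_apply, LinearMap.add_apply, hs, hs']
  apply (equivFinsuppOfBasisRight b).injective
  ext i x
  rw [coeff_apply, partialEval_eq_zero]
  simp

theorem dualDistrib_comp_map_id_dualDistrib_injective :
    Function.Injective (dualDistrib K V (W ⊗[K] U) ∘ₗ map .id (dualDistrib K W U)) :=
  dualDistrib_injective_s1.comp
    (Module.Flat.lTensor_preserves_injective_linearMap _ dualDistrib_injective_s1)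

end Field

end TensorProductPairings

section HomBialgebra

variable {k : Type*} [Field k] {A : Type*} [AddCommGroup A] [Module k A]
variable {α : A ≃ₗ[k] A} {μ : A →ₗ[k] A →ₗ[k] A} {e : A} {Δ : A →ₗ[k] A ⊗[k] A} {ε : A →ₗ[k] k}

theorem IsHomAlgebra.op (h : IsHomAlgebra k α μ e) : IsHomAlgebra k α μ.flip e := by
  obtain ⟨hmul, hassoc, hone, hone_mul, hmul_one⟩ := h
  exact ⟨fun a b => hmul b a, fun a b c => (hassoc c b a).symm, hone, hmul_one, hone_mul⟩

theorem IsHomBialgebra.op (h : IsHomBialgebra k α μ e Δ ε) :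
    IsHomBialgebra k α μ.flip e Δ ε := by
  obtain ⟨halg, hcoalg, hcomul_mul, hcomul_one, hcounit_mul, hcounit_one⟩ := h
  refine ⟨halg.op, hcoalg, fun a b => ?_, hcomul_one, fun a b => ?_, hcounit_one⟩
  · rw [LinearMap.flip_apply, hcomul_mul, map_lift_flip_tensorTensorTensorComm]
  · rw [LinearMap.flip_apply, hcounit_mul, mul_comm]

/-- The product `a, b ↦ α⁻²(ab)`: the one that turns a Hom-algebra with structure map `α` into a
Hom-algebra with structure map `α⁻¹`. -/
def invTwistMul (α : A ≃ₗ[k] A) (μ : A →ₗ[k] A →ₗ[k] A) : A →ₗ[k] A →ₗ[k] A :=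
  μ.compr₂ (α.symm.toLinearMap ∘ₗ α.symm.toLinearMap)

/-- The comultiplication `c ↦ Δ(α⁻²(c))`: the one that turns a Hom-coalgebra with structure map `α`
into a Hom-coalgebra with structure map `α⁻¹`. -/
def invTwistComul (α : A ≃ₗ[k] A) (Δ : A →ₗ[k] A ⊗[k] A) : A →ₗ[k] A ⊗[k] A :=
  Δ ∘ₗ α.symm.toLinearMap ∘ₗ α.symm.toLinearMap

theorem invTwistMul_apply (a b : A) : invTwistMul α μ a b = α.symm (α.symm (μ a b)) := rfl

theorem lift_invTwistMul :
    lift (invTwistMul α μ) = α.symm.toLinearMap ∘ₗ α.symm.toLinearMap ∘ₗ lift μ := by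
  ext; rfl

theorem invTwistComul_apply (c : A) : invTwistComul α Δ c = Δ (α.symm (α.symm c)) := rfl

theorem IsHomAlgebra.symm_mul (h : IsHomAlgebra k α μ e) (a b : A) :
    α.symm (μ a b) = μ (α.symm a) (α.symm b) := by
  have ⟨hmul, _⟩ := h
  rw [LinearEquiv.symm_apply_eq, hmul, α.apply_symm_apply, α.apply_symm_apply]

theorem IsHomAlgebra.symm_one (h : IsHomAlgebra k α μ e) : α.symm e = e := by
  have ⟨_, _, hone, _⟩ := h
  rw [LinearEquiv.symm_apply_eq, hone]

theorem IsHomCoalgebra.comul_symm (h : IsHomCoalgebra k α Δ ε) (c : A) :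
    Δ (α.symm c) = map α.symm.toLinearMap α.symm.toLinearMap (Δ c) := by
  have ⟨hcomul, _⟩ := h
  apply (congr α α).injective
  change map α.toLinearMap α.toLinearMap _ = map α.toLinearMap α.toLinearMap _
  rw [← hcomul, map_map]
  simp

theorem IsHomCoalgebra.counit_symm (h : IsHomCoalgebra k α Δ ε) (c : A) :
    ε (α.symm c) = ε c := by
  have ⟨_, hcounit, _⟩ := h
  rw [← hcounit, α.apply_symm_apply]

theorem IsHomAlgebra.invTwist (h : IsHomAlgebra k α μ e) :
    IsHomAlgebra k α.symm (invTwistMul α μ) e := by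
  have ⟨_, hassoc, _, hone_mul, hmul_one⟩ := h
  refine ⟨fun a b => ?_, fun a b c => ?_, h.symm_one, fun a => ?_, fun a => ?_⟩
  · simp only [invTwistMul_apply, h.symm_mul]
  · let αInv4 : A → A := fun x => α.symm (α.symm (α.symm (α.symm x)))
    simpa only [αInv4, invTwistMul_apply, h.symm_mul, α.apply_symm_apply]
      using hassoc (αInv4 a) (αInv4 b) (αInv4 c)
  · rw [invTwistMul_apply, hone_mul, α.symm_apply_apply]
  · rw [invTwistMul_apply, hmul_one, α.symm_apply_apply]

theorem IsHomCoalgebra.invTwist (h : IsHomCoalgebra k α Δ ε) :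
    IsHomCoalgebra k α.symm (invTwistComul α Δ) ε := by
  have ⟨hcomul, _, hcoassoc, hcounit_left, hcounit_right⟩ := h
  refine ⟨fun c => ?_, h.counit_symm, fun c => ?_, fun c => ?_, fun c => ?_⟩
  · simp only [invTwistComul_apply, h.comul_symm]
  · let d := α.symm (α.symm (α.symm (α.symm c)))
    have comul_eq : invTwistComul α Δ c
        = map (α.toLinearMap ∘ₗ α.toLinearMap) (α.toLinearMap ∘ₗ α.toLinearMap) (Δ d) := by
      rw [← map_map, ← hcomul, ← hcomul, α.apply_symm_apply, α.apply_symm_apply,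
        invTwistComul_apply]
    have symm_comp : α.symm.toLinearMap ∘ₗ α.toLinearMap ∘ₗ α.toLinearMap = α.toLinearMap := by
      ext
      simp
    have invTwistComul_comp : invTwistComul α Δ ∘ₗ α.toLinearMap ∘ₗ α.toLinearMap = Δ := by
      ext
      simp [invTwistComul_apply]
    rw [comul_eq, map_map, map_map, symm_comp, invTwistComul_comp, hcoassoc]
  · rw [invTwistComul_apply, hcounit_left, α.apply_symm_apply]
  · rw [invTwistComul_apply, hcounit_right, α.apply_symm_apply]

theorem IsHomBialgebra.invTwist (h : IsHomBialgebra k α μ e Δ ε) :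
    IsHomBialgebra k α.symm (invTwistMul α μ) e (invTwistComul α Δ) ε := by
  obtain ⟨halg, hcoalg, hcomul_mul, hcomul_one, hcounit_mul, hcounit_one⟩ := h
  refine ⟨halg.invTwist, hcoalg.invTwist, fun a b => ?_, ?_, fun a b => ?_, hcounit_one⟩
  · simp only [lift_invTwistMul, map_comp, LinearMap.comp_apply, invTwistComul_apply,
      invTwistMul_apply, ← hcomul_mul, ← hcoalg.comul_symm, halg.symm_mul]
  · rw [invTwistComul_apply, halg.symm_one, halg.symm_one, hcomul_one]
  · rw [invTwistMul_apply, hcoalg.counit_symm, hcoalg.counit_symm, hcounit_mul]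

/-- The product `(f g)(c) = f(c₁) g(c₂)` on `A*` transposing a comultiplication of `A`. -/
def dualMul (Δ : A →ₗ[k] A ⊗[k] A) :
    Module.Dual k A →ₗ[k] Module.Dual k A →ₗ[k] Module.Dual k A :=
  (mk k _ _).compr₂ (Δ.dualMap ∘ₗ dualDistrib k A A)

theorem dualMul_apply (f g : Module.Dual k A) :
    dualMul Δ f g = dualDistrib k A A (f ⊗ₜ g) ∘ₗ Δ := rfl

theorem lift_dualMul : lift (dualMul Δ) = Δ.dualMap ∘ₗ dualDistrib k A A :=
  lift_mk_compr₂ _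

/-- `δ` is a comultiplication on `A*` transposing the product `μ` of `A`, i.e.
`f₁(x) f₂(y) = f(xy)`. This is a predicate because `A* ⊗ A*` is in general smaller than `(A ⊗ A)*`,
so that `δ` need not exist. -/
def IsDualComul (μ : A →ₗ[k] A →ₗ[k] A)
    (δ : Module.Dual k A →ₗ[k] Module.Dual k A ⊗[k] Module.Dual k A) : Prop :=
  dualDistrib k A A ∘ₗ δ = (lift μ).dualMap

variable {δ : Module.Dual k A →ₗ[k] Module.Dual k A ⊗[k] Module.Dual k A}

theorem IsDualComul.dualDistrib_eq (hδ : IsDualComul μ δ) (f : Module.Dual k A) :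
    dualDistrib k A A (δ f) = f ∘ₗ lift μ :=
  LinearMap.congr_fun hδ f

theorem IsHomCoalgebra.dual (h : IsHomCoalgebra k α Δ ε) :
    IsHomAlgebra k α.dualMap (dualMul Δ) (ε : Module.Dual k A) := by
  obtain ⟨hcomul, hcounit, hcoassoc, hcounit_left, hcounit_right⟩ := h
  refine ⟨fun f g => ?_, fun f g l => ?_, LinearMap.ext hcounit, fun f => ?_, fun f => ?_⟩
  · ext c
    change dualDistrib k A A (f ⊗ₜ g) (Δ (α c))
      = dualDistrib k A A ((f ∘ₗ α.toLinearMap) ⊗ₜ (g ∘ₗ α.toLinearMap)) (Δ c)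
    rw [hcomul, ← dualDistrib_tmul_comp_map, LinearMap.comp_apply]
  · ext c
    change dualDistrib k A A ((f ∘ₗ α.toLinearMap) ⊗ₜ (dualDistrib k A A (g ⊗ₜ l) ∘ₗ Δ)) (Δ c)
      = dualDistrib k A A ((dualDistrib k A A (f ⊗ₜ g) ∘ₗ Δ) ⊗ₜ (l ∘ₗ α.toLinearMap)) (Δ c)
    rw [← dualDistrib_tmul_comp_map, ← dualDistrib_tmul_comp_map, LinearMap.comp_apply, hcoassoc]
    exact LinearMap.congr_fun (dualDistrib_map_dualDistrib_assoc ((f ⊗ₜ g) ⊗ₜ l)) _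
  · ext c
    rw [dualMul_apply, dualDistrib_tmul_eq_comp_lid]
    exact congrArg f (hcounit_left c)
  · ext c
    rw [dualMul_apply, dualDistrib_tmul_eq_comp_rid]
    exact congrArg f (hcounit_right c)

theorem IsHomAlgebra.dual (h : IsHomAlgebra k α μ e) (hδ : IsDualComul μ δ) :
    IsHomCoalgebra k α.dualMap δ (Module.Dual.eval k A e) := by
  obtain ⟨hmul, hassoc, hone, hone_mul, hmul_one⟩ := h
  refine ⟨fun f => ?_, fun f => congrArg f hone, fun f => ?_, fun f => ?_, fun f => ?_⟩
  · apply dualDistrib_injective_s1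
    change _ = dualDistrib k A A (map α.toLinearMap.dualMap α.toLinearMap.dualMap (δ f))
    rw [dualDistrib_map_dualMap_s1, hδ.dualDistrib_eq, hδ.dualDistrib_eq]
    ext x y
    exact congrArg f (hmul x y)
  · apply dualDistrib_comp_map_id_dualDistrib_injective
    rw [← (LinearMap.cancel_right (TensorProduct.assoc k A A A).surjective)]
    simp only [LinearMap.comp_apply]
    rw [dualDistrib_map_dualDistrib_assoc, map_map, map_map, hδ]
    change dualDistrib k A _ (map α.toLinearMap.dualMap (lift μ).dualMap (δ f)) ∘ₗ _
      = dualDistrib k _ A (map (lift μ).dualMap α.toLinearMap.dualMap (δ f))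
    rw [dualDistrib_map_dualMap_s1, dualDistrib_map_dualMap_s1, hδ.dualDistrib_eq]
    ext x y z
    exact congrArg f (hassoc x y z)
  · ext y
    rw [lid_map_eval_apply_s1, hδ.dualDistrib_eq]
    exact congrArg f (hone_mul y)
  · ext x
    rw [rid_map_eval_apply_s1, hδ.dualDistrib_eq]
    exact congrArg f (hmul_one x)

theorem IsHomBialgebra.dual (h : IsHomBialgebra k α μ e Δ ε) (hδ : IsDualComul μ δ) :
    IsHomBialgebra k α.dualMap (dualMul Δ) (ε : Module.Dual k A) δ (Module.Dual.eval k A e) := by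
  obtain ⟨halg, hcoalg, hcomul_mul, hcomul_one, hcounit_mul, hcounit_one⟩ := h
  refine ⟨hcoalg.dual, halg.dual hδ, fun f g => ?_, ?_, fun f g => ?_, hcounit_one⟩
  · apply dualDistrib_injective_s1
    rw [hδ.dualDistrib_eq, dualMul_apply, lift_dualMul, map_comp, LinearMap.comp_apply,
      dualDistrib_map_dualMap_s1, dualDistrib_map_dualDistrib_tensorTensorTensorComm,
      hδ.dualDistrib_eq, hδ.dualDistrib_eq, ← dualDistrib_tmul_comp_map]
    ext x y
    exact congrArg (dualDistrib k A A (f ⊗ₜ g)) (hcomul_mul x y)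
  · apply dualDistrib_injective_s1
    rw [hδ.dualDistrib_eq]
    ext x y
    exact hcounit_mul x y
  · change dualDistrib k A A (f ⊗ₜ g) (Δ e) = f e * g e
    rw [hcomul_one, dualDistrib_apply]

end HomBialgebra

theorem dual_of_homBialgebra_isHomBialgebra_general
    {A : Type*} [AddCommGroup A] [Module k A]
    (αA : A ≃ₗ[k] A) (μ : A →ₗ[k] A →ₗ[k] A) (e : A)
    (Δ : A →ₗ[k] A ⊗[k] A) (ε : A →ₗ[k] k)
    (hA : IsHomBialgebra k αA μ e Δ ε)
    (Δbar : Module.Dual k A →ₗ[k] Module.Dual k A ⊗[k] Module.Dual k A)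
    (hΔbar : ∀ (f : Module.Dual k A) (x y : A),
        TensorProduct.dualDistrib k A A (Δbar f) (x ⊗ₜ[k] y)
          = f (αA.symm (αA.symm (μ y x))))
    (star : Module.Dual k A →ₗ[k] Module.Dual k A →ₗ[k] Module.Dual k A)
    (hstar : ∀ (f f' : Module.Dual k A) (y : A),
        star f f' y = TensorProduct.dualDistrib k A A
          ((f ∘ₗ (αA.symm.toLinearMap ∘ₗ αA.symm.toLinearMap)) ⊗ₜ[k]
            (f' ∘ₗ (αA.symm.toLinearMap ∘ₗ αA.symm.toLinearMap))) (Δ y)) :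
    IsHomBialgebra k αA.symm.dualMap star (ε : Module.Dual k A) Δbar
      (Module.Dual.eval k A e) := by
  have ⟨_, hcoalg, _⟩ := hA
  have star_eq : star = dualMul (invTwistComul αA Δ) := by
    ext f g y
    rw [hstar, dualMul_apply, ← dualDistrib_tmul_comp_map, map_comp, LinearMap.comp_apply,
      LinearMap.comp_apply, ← hcoalg.comul_symm, ← hcoalg.comul_symm]
    rfl
  have isDualComul : IsDualComul (invTwistMul αA μ.flip) Δbar := by
    ext f x y
    exact hΔbar f x y
  rw [star_eq]
  exact hA.op.invTwist.dual isDualComul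

/-- the dual of a finite-dimensional Hom-bialgebra, with the
convolution product and the `cop`-comultiplication, is a Hom-bialgebra
(`A*^cop`). -/
theorem dual_of_homBialgebra_isHomBialgebra
    {A : Type*} [AddCommGroup A] [Module k A] [FiniteDimensional k A]
    (αA : A ≃ₗ[k] A) (μ : A →ₗ[k] A →ₗ[k] A) (e : A)
    (Δ : A →ₗ[k] A ⊗[k] A) (ε : A →ₗ[k] k)
    (hA : IsHomBialgebra k αA μ e Δ ε)
    (Δbar : Module.Dual k A →ₗ[k] Module.Dual k A ⊗[k] Module.Dual k A)
    (hΔbar : ∀ (f : Module.Dual k A) (x y : A),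
        TensorProduct.dualDistrib k A A (Δbar f) (x ⊗ₜ[k] y)
          = f (αA.symm (αA.symm (μ y x))))
    (star : Module.Dual k A →ₗ[k] Module.Dual k A →ₗ[k] Module.Dual k A)
    (hstar : ∀ (f f' : Module.Dual k A) (y : A),
        star f f' y = TensorProduct.dualDistrib k A A
          ((f ∘ₗ (αA.symm.toLinearMap ∘ₗ αA.symm.toLinearMap)) ⊗ₜ[k]
            (f' ∘ₗ (αA.symm.toLinearMap ∘ₗ αA.symm.toLinearMap))) (Δ y)) :
    IsHomBialgebra k αA.symm.dualMap star (ε : Module.Dual k A) Δbar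
      (Module.Dual.eval k A e) :=
  dual_of_homBialgebra_isHomBialgebra_general k αA μ e Δ ε hA Δbar hΔbar star hstar
end
end

section
/- Let (B, α_B) and (H, α_H) be Hom-coalgebras over a field k and let φ : B⊗H → H⊗B be a linear map with φ∘(α_B⊗α_H) = (α_H⊗α_B)∘φ, written φ(b⊗h) = Σ h^φ ⊗ b^φ. Define on B⊗H the comultiplication Δ_{B⊗H}(b⊗h) = Σ (b₁ ⊗ (h₁)^φ) ⊗ ((b₂)^φ ⊗ h₂), where φ is applied to b₂⊗h₁, and the counit ε_{B⊗H}(b⊗h) = ε_B(b)ε_H(h). Then φ is a Hom-cotwistor if and only if (B⊗H, α_B⊗α_H, Δ_{B⊗H}, ε_{B⊗H}) is a Hom-coalgebra over k (called the smash coproduct of B and H). -/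
open TensorProduct BigOperators

noncomputable section

variable (k : Type*) [Field k]

/-!
The two projections `p = id ⊗ ε_H` and `q = ε_B ⊗ id` of `B ⊗ H` recover the twist from the smash
comultiplication: `(q ⊗ p) ∘ Δ = φ ∘ (α_B ⊗ α_H)`, and `α_B ⊗ α_H` is bijective. Conditions (M3)
and (M4) are the two counit axioms for `B ⊗ H`, and they make `p` and `q` comultiplicative. Hence
applying `q ⊗ p ⊗ p` and `q ⊗ q ⊗ p` to the coassociativity axiom gives (M1) and (M2).
Conversely, (M1) and (M2) let `φ` be moved past the comultiplications of `B` and `H`, so that both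
sides of the coassociativity axiom become the same rearrangement of the iterated comultiplications
of `B` and `H`.
-/

namespace SmashCoproduct

open scoped RingTheory.LinearMap

section Slice

variable {R X X' Y Y' Z : Type*} [CommSemiring R]
variable [AddCommMonoid X] [Module R X] [AddCommMonoid X'] [Module R X']
variable [AddCommMonoid Y] [Module R Y] [AddCommMonoid Y'] [Module R Y']
variable [AddCommMonoid Z] [Module R Z]

/-- The left slice map `x ⊗ y ↦ ω x • y` of a functional `ω`. -/
def leftSlice (ω : X →ₗ[R] R) : X ⊗[R] Y →ₗ[R] Y :=
  (TensorProduct.lid R Y).toLinearMap ∘ₗ (ω ⊗ₘ .id)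

/-- The right slice map `x ⊗ y ↦ ω y • x` of a functional `ω`. -/
def rightSlice (ω : Y →ₗ[R] R) : X ⊗[R] Y →ₗ[R] X :=
  (TensorProduct.rid R X).toLinearMap ∘ₗ (.id ⊗ₘ ω)

@[simp]
lemma leftSlice_tmul (ω : X →ₗ[R] R) (x : X) (y : Y) :
    leftSlice ω (x ⊗ₜ[R] y) = ω x • y := rfl

@[simp]
lemma rightSlice_tmul (ω : Y →ₗ[R] R) (x : X) (y : Y) :
    rightSlice ω (x ⊗ₜ[R] y) = ω y • x := rfl

lemma leftSlice_map (ω : X' →ₗ[R] R) (f : X →ₗ[R] X') (g : Y →ₗ[R] Y') (t : X ⊗[R] Y) :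
    leftSlice ω ((f ⊗ₘ g) t) = g (leftSlice (ω ∘ₗ f) t) := by
  induction t <;> simp_all

lemma rightSlice_map (ω : Y' →ₗ[R] R) (f : X →ₗ[R] X') (g : Y →ₗ[R] Y') (t : X ⊗[R] Y) :
    rightSlice ω ((f ⊗ₘ g) t) = f (rightSlice (ω ∘ₗ g) t) := by
  induction t <;> simp_all

lemma leftSlice_assoc (ω : X →ₗ[R] R) (t : (X ⊗[R] Y) ⊗[R] Z) :
    leftSlice ω (TensorProduct.assoc R X Y Z t) = (leftSlice ω ⊗ₘ .id) t := by
  suffices h : leftSlice ω ∘ₗ (TensorProduct.assoc R X Y Z).toLinearMap = leftSlice ω ⊗ₘ .id from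
    LinearMap.congr_fun h t
  ext
  simp [smul_tmul']

lemma rightSlice_assoc_symm (ω : Z →ₗ[R] R) (t : X ⊗[R] (Y ⊗[R] Z)) :
    rightSlice ω ((TensorProduct.assoc R X Y Z).symm t) = (.id ⊗ₘ rightSlice ω) t := by
  suffices h : rightSlice ω ∘ₗ (TensorProduct.assoc R X Y Z).symm.toLinearMap
      = .id ⊗ₘ rightSlice ω from LinearMap.congr_fun h t
  ext
  simp

lemma map_rightSlice_assoc_symm (ω : Y →ₗ[R] R) (t : X ⊗[R] (Y ⊗[R] Z)) :
    (rightSlice ω ⊗ₘ .id) ((TensorProduct.assoc R X Y Z).symm t) = (.id ⊗ₘ leftSlice ω) t := by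
  suffices h : (rightSlice ω ⊗ₘ .id) ∘ₗ (TensorProduct.assoc R X Y Z).symm.toLinearMap
      = .id ⊗ₘ leftSlice ω from LinearMap.congr_fun h t
  ext
  simp [smul_tmul]

end Slice

section Middle

variable {R X X' Y Y' Y₁ Y₁' Z Z' Z₁ Z₁' W W' : Type*} [CommSemiring R]
variable [AddCommMonoid X] [Module R X] [AddCommMonoid X'] [Module R X']
variable [AddCommMonoid Y] [Module R Y] [AddCommMonoid Y'] [Module R Y']
variable [AddCommMonoid Y₁] [Module R Y₁] [AddCommMonoid Y₁'] [Module R Y₁']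
variable [AddCommMonoid Z] [Module R Z] [AddCommMonoid Z'] [Module R Z']
variable [AddCommMonoid Z₁] [Module R Z₁] [AddCommMonoid Z₁'] [Module R Z₁']
variable [AddCommMonoid W] [Module R W] [AddCommMonoid W'] [Module R W']

/-- The map `id ⊗ f ⊗ id` applying `f : Y ⊗ Z → Z' ⊗ Y'` to the two inner factors of
`(X ⊗ Y) ⊗ (Z ⊗ W)`. -/
def mapMiddle (f : Y ⊗[R] Z →ₗ[R] Z' ⊗[R] Y') :
    (X ⊗[R] Y) ⊗[R] (Z ⊗[R] W) →ₗ[R] (X ⊗[R] Z') ⊗[R] (Y' ⊗[R] W) :=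
  (TensorProduct.tensorTensorTensorAssoc R X Z' Y' W).symm.toLinearMap
    ∘ₗ ((.id ⊗ₘ f) ⊗ₘ .id)
    ∘ₗ (TensorProduct.tensorTensorTensorAssoc R X Y Z W).toLinearMap

lemma mapMiddle_tmul (f : Y ⊗[R] Z →ₗ[R] Z' ⊗[R] Y') (x : X) (y : Y) (z : Z) (w : W) :
    mapMiddle f ((x ⊗ₜ y) ⊗ₜ (z ⊗ₜ w))
      = (TensorProduct.mk R X Z' x ⊗ₘ (TensorProduct.mk R Y' W).flip w) (f (y ⊗ₜ z)) := by
  simp only [mapMiddle, LinearMap.comp_apply, LinearEquiv.coe_coe, map_tmul, LinearMap.id_apply,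
    tensorTensorTensorAssoc_tmul]
  induction f (y ⊗ₜ z) <;> simp_all [tmul_add, add_tmul]

lemma map_map_mapMiddle {f : Y ⊗[R] Z →ₗ[R] Z' ⊗[R] Y'} {f₁ : Y₁ ⊗[R] Z₁ →ₗ[R] Z₁' ⊗[R] Y₁'}
    {g : Y →ₗ[R] Y₁} {h : Z →ₗ[R] Z₁} {g' : Y' →ₗ[R] Y₁'} {h' : Z' →ₗ[R] Z₁'}
    (hf : (h' ⊗ₘ g') ∘ₗ f = f₁ ∘ₗ (g ⊗ₘ h)) (a : X →ₗ[R] X') (b : W →ₗ[R] W')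
    (t : (X ⊗[R] Y) ⊗[R] (Z ⊗[R] W)) :
    ((a ⊗ₘ h') ⊗ₘ (g' ⊗ₘ b)) (mapMiddle f t) = mapMiddle f₁ (((a ⊗ₘ g) ⊗ₘ (h ⊗ₘ b)) t) := by
  suffices H : ((a ⊗ₘ h') ⊗ₘ (g' ⊗ₘ b)) ∘ₗ mapMiddle f
      = mapMiddle f₁ ∘ₗ ((a ⊗ₘ g) ⊗ₘ (h ⊗ₘ b)) from LinearMap.congr_fun H t
  ext x y z w
  have hyz : f₁ (g y ⊗ₜ h z) = (h' ⊗ₘ g') (f (y ⊗ₜ z)) := (LinearMap.congr_fun hf (y ⊗ₜ z)).symm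
  simp only [AlgebraTensorModule.curry_apply, LinearMap.restrictScalars_self, curry_apply,
    LinearMap.comp_apply, map_tmul, mapMiddle_tmul, hyz]
  induction f (y ⊗ₜ z) <;> simp_all

lemma map_leftSlice_mapMiddle (f : Y ⊗[R] Z →ₗ[R] Z' ⊗[R] Y') (ω : X →ₗ[R] R)
    (t : (X ⊗[R] Y) ⊗[R] (Z ⊗[R] W)) :
    (leftSlice ω ⊗ₘ .id) (mapMiddle f t)
      = TensorProduct.assoc R Z' Y' W
        ((f ⊗ₘ .id) ((TensorProduct.assoc R Y Z W).symm ((leftSlice ω ⊗ₘ .id) t))) := by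
  suffices H : (leftSlice ω ⊗ₘ .id) ∘ₗ mapMiddle f
      = (TensorProduct.assoc R Z' Y' W).toLinearMap ∘ₗ (f ⊗ₘ .id)
        ∘ₗ (TensorProduct.assoc R Y Z W).symm.toLinearMap ∘ₗ (leftSlice ω ⊗ₘ .id) from
    LinearMap.congr_fun H t
  ext x y z w
  simp only [AlgebraTensorModule.curry_apply, LinearMap.restrictScalars_self, curry_apply,
    LinearMap.comp_apply, LinearEquiv.coe_coe, mapMiddle_tmul, map_tmul, leftSlice_tmul,
    LinearMap.id_apply, ← smul_tmul', map_smul, assoc_symm_tmul]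
  induction f (y ⊗ₜ z) <;> simp_all [add_tmul, ← smul_tmul']

lemma map_rightSlice_mapMiddle (f : Y ⊗[R] Z →ₗ[R] Z' ⊗[R] Y') (ω : W →ₗ[R] R)
    (t : (X ⊗[R] Y) ⊗[R] (Z ⊗[R] W)) :
    (.id ⊗ₘ rightSlice ω) (mapMiddle f t)
      = (TensorProduct.assoc R X Z' Y').symm
        ((.id ⊗ₘ f) (TensorProduct.assoc R X Y Z ((.id ⊗ₘ rightSlice ω) t))) := by
  suffices H : (.id ⊗ₘ rightSlice ω) ∘ₗ mapMiddle f
      = (TensorProduct.assoc R X Z' Y').symm.toLinearMap ∘ₗ (.id ⊗ₘ f)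
        ∘ₗ (TensorProduct.assoc R X Y Z).toLinearMap ∘ₗ (.id ⊗ₘ rightSlice ω) from
    LinearMap.congr_fun H t
  ext x y z w
  simp only [AlgebraTensorModule.curry_apply, LinearMap.restrictScalars_self, curry_apply,
    LinearMap.comp_apply, LinearEquiv.coe_coe, mapMiddle_tmul, map_tmul, rightSlice_tmul,
    LinearMap.id_apply, tmul_smul, map_smul, assoc_tmul]
  induction f (y ⊗ₜ z) <;> simp_all [tmul_add]

end Middle

section Twist

variable {R B H : Type*} [CommSemiring R]
variable [AddCommMonoid B] [Module R B] [AddCommMonoid H] [Module R H]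

/-- The twist `φ_{B ⊗ B, H}` moving `H` leftwards past `B ⊗ B` by two applications of `φ`; (M1)
compares it with `φ` along the comultiplication of `B`. -/
def twistTensorLeft (φ : B ⊗[R] H →ₗ[R] H ⊗[R] B) :
    (B ⊗[R] B) ⊗[R] H →ₗ[R] H ⊗[R] (B ⊗[R] B) :=
  (TensorProduct.assoc R H B B).toLinearMap ∘ₗ (φ ⊗ₘ .id)
    ∘ₗ (TensorProduct.assoc R B H B).symm.toLinearMap ∘ₗ (.id ⊗ₘ φ)
    ∘ₗ (TensorProduct.assoc R B B H).toLinearMap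

/-- The twist `φ_{B, H ⊗ H}` moving `B` rightwards past `H ⊗ H` by two applications of `φ`; (M2)
compares it with `φ` along the comultiplication of `H`. -/
def twistTensorRight (φ : B ⊗[R] H →ₗ[R] H ⊗[R] B) :
    B ⊗[R] (H ⊗[R] H) →ₗ[R] (H ⊗[R] H) ⊗[R] B :=
  (TensorProduct.assoc R H H B).symm.toLinearMap ∘ₗ (.id ⊗ₘ φ)
    ∘ₗ (TensorProduct.assoc R H B H).toLinearMap ∘ₗ (φ ⊗ₘ .id)
    ∘ₗ (TensorProduct.assoc R B H H).symm.toLinearMap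

-- Both sides move each `bᵢ` past each `hⱼ` with `j < i`. They differ only in the order of the
-- crossings `(b₂, h₁)` and `(b₃, h₂)`, which involve disjoint factors.
lemma assoc_map_mapMiddle_twistTensorRight (φ : B ⊗[R] H →ₗ[R] H ⊗[R] B)
    (t : ((B ⊗[R] B) ⊗[R] B) ⊗[R] ((H ⊗[R] H) ⊗[R] H)) :
    TensorProduct.assoc R (B ⊗[R] H) (B ⊗[R] H) (B ⊗[R] H)
        ((mapMiddle φ ⊗ₘ .id) (mapMiddle (twistTensorRight φ) t))
      = (.id ⊗ₘ mapMiddle φ) (mapMiddle (twistTensorLeft φ)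
        (((TensorProduct.assoc R B B B).toLinearMap
          ⊗ₘ (TensorProduct.assoc R H H H).toLinearMap) t)) := by
  suffices h : (TensorProduct.assoc R (B ⊗[R] H) (B ⊗[R] H) (B ⊗[R] H)).toLinearMap
        ∘ₗ (mapMiddle φ ⊗ₘ .id) ∘ₗ mapMiddle (twistTensorRight φ)
      = (.id ⊗ₘ mapMiddle φ) ∘ₗ mapMiddle (twistTensorLeft φ)
        ∘ₗ ((TensorProduct.assoc R B B B).toLinearMap
          ⊗ₘ (TensorProduct.assoc R H H H).toLinearMap) from LinearMap.congr_fun h t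
  choose S hS using fun (b : B) (h : H) => exists_finset (φ (b ⊗ₜ h))
  ext b₁ b₂ b₃ h₁ h₂ h₃
  simpa [mapMiddle_tmul, twistTensorLeft, twistTensorRight, hS, sum_tmul, tmul_sum] using
    Finset.sum_congr rfl fun _ _ => Finset.sum_comm

end Twist

section SmashCoproduct

variable {k}
variable {B H : Type*} [AddCommGroup B] [Module k B] [AddCommGroup H] [Module k H]
variable {αB : B ≃ₗ[k] B} {ΔB : B →ₗ[k] B ⊗[k] B} {εB : B →ₗ[k] k}
variable {αH : H ≃ₗ[k] H} {ΔH : H →ₗ[k] H ⊗[k] H} {εH : H →ₗ[k] k}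
variable {φ : B ⊗[k] H →ₗ[k] H ⊗[k] B}

lemma _root_.IsHomCoalgebra.comul_comp (hB : IsHomCoalgebra k αB ΔB εB) :
    ΔB ∘ₗ αB.toLinearMap = (αB.toLinearMap ⊗ₘ αB.toLinearMap) ∘ₗ ΔB :=
  LinearMap.ext hB.1

lemma _root_.IsHomCoalgebra.counit_comp (hB : IsHomCoalgebra k αB ΔB εB) :
    εB ∘ₗ αB.toLinearMap = εB :=
  LinearMap.ext hB.2.1

lemma _root_.IsHomCoalgebra.comul_coassoc (hB : IsHomCoalgebra k αB ΔB εB) :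
    (αB.toLinearMap ⊗ₘ ΔB) ∘ₗ ΔB
      = (TensorProduct.assoc k B B B).toLinearMap ∘ₗ (ΔB ⊗ₘ αB.toLinearMap) ∘ₗ ΔB :=
  LinearMap.ext hB.2.2.1

lemma _root_.IsHomCoalgebra.leftSlice_comp_comul (hB : IsHomCoalgebra k αB ΔB εB) :
    leftSlice εB ∘ₗ ΔB = αB.toLinearMap :=
  LinearMap.ext hB.2.2.2.1

lemma _root_.IsHomCoalgebra.rightSlice_comp_comul (hB : IsHomCoalgebra k αB ΔB εB) :
    rightSlice εB ∘ₗ ΔB = αB.toLinearMap :=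
  LinearMap.ext hB.2.2.2.2

variable (φ ΔB ΔH) in
lemma smashComul_eq_mapMiddle_comp :
    smashComul k φ ΔB ΔH = mapMiddle φ ∘ₗ (ΔB ⊗ₘ ΔH) := by
  rw [smashComul]
  simp only [← LinearMap.comp_assoc]
  congr 1
  choose S hS using fun (b : B) (h : H) => exists_finset (φ (b ⊗ₜ h))
  ext b₁ b₂ h₁ h₂
  simp [mapMiddle_tmul, hS, sum_tmul, tmul_sum]

variable (εB εH) in
lemma smashCounit_eq_comp_leftSlice : smashCounit k εB εH = εH ∘ₗ leftSlice εB := by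
  ext
  simp [smashCounit]

variable (εB εH) in
lemma smashCounit_eq_comp_rightSlice : smashCounit k εB εH = εB ∘ₗ rightSlice εH := by
  ext
  simp [smashCounit, mul_comm]

lemma smashComul_map (hB : IsHomCoalgebra k αB ΔB εB) (hH : IsHomCoalgebra k αH ΔH εH)
    (hφ : φ ∘ₗ (αB.toLinearMap ⊗ₘ αH.toLinearMap) = (αH.toLinearMap ⊗ₘ αB.toLinearMap) ∘ₗ φ)
    (x : B ⊗[k] H) :
    smashComul k φ ΔB ΔH ((αB.toLinearMap ⊗ₘ αH.toLinearMap) x)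
      = ((αB.toLinearMap ⊗ₘ αH.toLinearMap) ⊗ₘ (αB.toLinearMap ⊗ₘ αH.toLinearMap))
        (smashComul k φ ΔB ΔH x) := by
  simp only [smashComul_eq_mapMiddle_comp, LinearMap.comp_apply, map_map_mapMiddle hφ.symm,
    map_map, hB.comul_comp, hH.comul_comp]

lemma smashCounit_map (hB : IsHomCoalgebra k αB ΔB εB) (hH : IsHomCoalgebra k αH ΔH εH)
    (x : B ⊗[k] H) :
    smashCounit k εB εH ((αB.toLinearMap ⊗ₘ αH.toLinearMap) x) = smashCounit k εB εH x := by
  simp only [smashCounit, LinearMap.comp_apply, map_map, hB.counit_comp, hH.counit_comp]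

lemma map_leftSlice_smashComul (hB : IsHomCoalgebra k αB ΔB εB) (x : B ⊗[k] H) :
    (leftSlice εB ⊗ₘ .id) (smashComul k φ ΔB ΔH x)
      = TensorProduct.assoc k H B H
        ((φ ⊗ₘ .id) ((TensorProduct.assoc k B H H).symm ((αB.toLinearMap ⊗ₘ ΔH) x))) := by
  rw [smashComul_eq_mapMiddle_comp, LinearMap.comp_apply, map_leftSlice_mapMiddle, map_map,
    hB.leftSlice_comp_comul, LinearMap.id_comp]

lemma map_rightSlice_smashComul (hH : IsHomCoalgebra k αH ΔH εH) (x : B ⊗[k] H) :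
    (.id ⊗ₘ rightSlice εH) (smashComul k φ ΔB ΔH x)
      = (TensorProduct.assoc k B H B).symm
        ((.id ⊗ₘ φ) (TensorProduct.assoc k B B H ((ΔB ⊗ₘ αH.toLinearMap) x))) := by
  rw [smashComul_eq_mapMiddle_comp, LinearMap.comp_apply, map_rightSlice_mapMiddle, map_map,
    hH.rightSlice_comp_comul, LinearMap.id_comp]

lemma map_leftSlice_rightSlice_smashComul (hB : IsHomCoalgebra k αB ΔB εB)
    (hH : IsHomCoalgebra k αH ΔH εH) (x : B ⊗[k] H) :
    (leftSlice εB ⊗ₘ rightSlice εH) (smashComul k φ ΔB ΔH x)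
      = φ ((αB.toLinearMap ⊗ₘ αH.toLinearMap) x) := by
  calc (leftSlice εB ⊗ₘ rightSlice εH) (smashComul k φ ΔB ΔH x)
    _ = (.id ⊗ₘ rightSlice εH) ((leftSlice εB ⊗ₘ .id) (smashComul k φ ΔB ΔH x)) := by
      rw [map_map, LinearMap.id_comp, LinearMap.comp_id]
    _ = rightSlice εH ((φ ⊗ₘ .id) ((TensorProduct.assoc k B H H).symm
          ((αB.toLinearMap ⊗ₘ ΔH) x))) := by
      rw [map_leftSlice_smashComul hB, ← rightSlice_assoc_symm, LinearEquiv.symm_apply_apply]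
    _ = φ ((αB.toLinearMap ⊗ₘ αH.toLinearMap) x) := by
      rw [rightSlice_map, LinearMap.comp_id, rightSlice_assoc_symm, map_map, LinearMap.id_comp,
        hH.rightSlice_comp_comul]

lemma leftSlice_comp_eq_rightSlice_iff (hB : IsHomCoalgebra k αB ΔB εB)
    (hH : IsHomCoalgebra k αH ΔH εH) :
    leftSlice εH ∘ₗ φ = rightSlice εH ↔
      ∀ x, leftSlice (smashCounit k εB εH) (smashComul k φ ΔB ΔH x)
        = (αB.toLinearMap ⊗ₘ αH.toLinearMap) x := by
  refine ⟨fun hφ x => ?_, fun hΔ => LinearMap.ext fun y => ?_⟩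
  · rw [smashCounit_eq_comp_leftSlice]
    calc leftSlice (εH ∘ₗ leftSlice εB) (smashComul k φ ΔB ΔH x)
      _ = leftSlice εH ((leftSlice εB ⊗ₘ .id) (smashComul k φ ΔB ΔH x)) := by
        rw [leftSlice_map, LinearMap.id_apply]
      _ = ((leftSlice εH ∘ₗ φ) ⊗ₘ .id)
          ((TensorProduct.assoc k B H H).symm ((αB.toLinearMap ⊗ₘ ΔH) x)) := by
        rw [map_leftSlice_smashComul hB, leftSlice_assoc, map_map, LinearMap.id_comp]
      _ = (αB.toLinearMap ⊗ₘ αH.toLinearMap) x := by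
        rw [hφ, map_rightSlice_assoc_symm, map_map, hH.leftSlice_comp_comul, LinearMap.id_comp]
  · obtain ⟨x, rfl⟩ := map_surjective αB.surjective αH.surjective y
    rw [LinearMap.comp_apply, ← map_leftSlice_rightSlice_smashComul hB hH, leftSlice_map,
      ← smashCounit_eq_comp_leftSlice, hΔ]

lemma rightSlice_comp_eq_leftSlice_iff (hB : IsHomCoalgebra k αB ΔB εB)
    (hH : IsHomCoalgebra k αH ΔH εH) :
    rightSlice εB ∘ₗ φ = leftSlice εB ↔
      ∀ x, rightSlice (smashCounit k εB εH) (smashComul k φ ΔB ΔH x)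
        = (αB.toLinearMap ⊗ₘ αH.toLinearMap) x := by
  refine ⟨fun hφ x => ?_, fun hΔ => LinearMap.ext fun y => ?_⟩
  · rw [smashCounit_eq_comp_rightSlice]
    calc rightSlice (εB ∘ₗ rightSlice εH) (smashComul k φ ΔB ΔH x)
      _ = rightSlice εB ((.id ⊗ₘ rightSlice εH) (smashComul k φ ΔB ΔH x)) := by
        rw [rightSlice_map, LinearMap.id_apply]
      _ = (.id ⊗ₘ (rightSlice εB ∘ₗ φ))
          (TensorProduct.assoc k B B H ((ΔB ⊗ₘ αH.toLinearMap) x)) := by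
        rw [map_rightSlice_smashComul hH, rightSlice_assoc_symm, map_map, LinearMap.id_comp]
      _ = (αB.toLinearMap ⊗ₘ αH.toLinearMap) x := by
        rw [hφ, ← map_rightSlice_assoc_symm, LinearEquiv.symm_apply_apply, map_map,
          hB.rightSlice_comp_comul, LinearMap.id_comp]
  · obtain ⟨x, rfl⟩ := map_surjective αB.surjective αH.surjective y
    rw [LinearMap.comp_apply, ← map_leftSlice_rightSlice_smashComul hB hH, rightSlice_map,
      ← smashCounit_eq_comp_rightSlice, hΔ]

lemma map_rightSlice_rightSlice_smashComul (hH : IsHomCoalgebra k αH ΔH εH)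
    (hφ : leftSlice εH ∘ₗ φ = rightSlice εH) :
    (rightSlice εH ⊗ₘ rightSlice εH) ∘ₗ smashComul k φ ΔB ΔH = ΔB ∘ₗ rightSlice εH := by
  refine LinearMap.ext fun x => ?_
  calc (rightSlice εH ⊗ₘ rightSlice εH) (smashComul k φ ΔB ΔH x)
    _ = (rightSlice εH ⊗ₘ .id) ((.id ⊗ₘ rightSlice εH) (smashComul k φ ΔB ΔH x)) := by
      rw [map_map, LinearMap.id_comp, LinearMap.comp_id]
    _ = (.id ⊗ₘ (leftSlice εH ∘ₗ φ))
          (TensorProduct.assoc k B B H ((ΔB ⊗ₘ αH.toLinearMap) x)) := by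
      rw [map_rightSlice_smashComul hH, map_rightSlice_assoc_symm, map_map, LinearMap.id_comp]
    _ = rightSlice εH ((ΔB ⊗ₘ αH.toLinearMap) x) := by
      rw [hφ, ← rightSlice_assoc_symm, LinearEquiv.symm_apply_apply]
    _ = ΔB (rightSlice εH x) := by rw [rightSlice_map, hH.counit_comp]

lemma map_leftSlice_leftSlice_smashComul (hB : IsHomCoalgebra k αB ΔB εB)
    (hφ : rightSlice εB ∘ₗ φ = leftSlice εB) :
    (leftSlice εB ⊗ₘ leftSlice εB) ∘ₗ smashComul k φ ΔB ΔH = ΔH ∘ₗ leftSlice εB := by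
  refine LinearMap.ext fun x => ?_
  calc (leftSlice εB ⊗ₘ leftSlice εB) (smashComul k φ ΔB ΔH x)
    _ = (.id ⊗ₘ leftSlice εB) ((leftSlice εB ⊗ₘ .id) (smashComul k φ ΔB ΔH x)) := by
      rw [map_map, LinearMap.id_comp, LinearMap.comp_id]
    _ = ((rightSlice εB ∘ₗ φ) ⊗ₘ .id)
          ((TensorProduct.assoc k B H H).symm ((αB.toLinearMap ⊗ₘ ΔH) x)) := by
      rw [map_leftSlice_smashComul hB, ← map_rightSlice_assoc_symm, LinearEquiv.symm_apply_apply,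
        map_map, LinearMap.id_comp]
    _ = leftSlice εB ((αB.toLinearMap ⊗ₘ ΔH) x) := by
      rw [hφ, ← leftSlice_assoc, LinearEquiv.apply_symm_apply]
    _ = ΔH (leftSlice εB x) := by rw [leftSlice_map, hB.counit_comp]

lemma smashComul_coassoc (hB : IsHomCoalgebra k αB ΔB εB) (hH : IsHomCoalgebra k αH ΔH εH)
    (hφ_left : (αH.toLinearMap ⊗ₘ ΔB) ∘ₗ φ = twistTensorLeft φ ∘ₗ (ΔB ⊗ₘ αH.toLinearMap))
    (hφ_right : (ΔH ⊗ₘ αB.toLinearMap) ∘ₗ φ = twistTensorRight φ ∘ₗ (αB.toLinearMap ⊗ₘ ΔH))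
    (x : B ⊗[k] H) :
    ((αB.toLinearMap ⊗ₘ αH.toLinearMap) ⊗ₘ smashComul k φ ΔB ΔH) (smashComul k φ ΔB ΔH x)
      = TensorProduct.assoc k (B ⊗[k] H) (B ⊗[k] H) (B ⊗[k] H)
        ((smashComul k φ ΔB ΔH ⊗ₘ (αB.toLinearMap ⊗ₘ αH.toLinearMap))
          (smashComul k φ ΔB ΔH x)) := by
  have comul_right : ((αB.toLinearMap ⊗ₘ αH.toLinearMap) ⊗ₘ smashComul k φ ΔB ΔH)
        (smashComul k φ ΔB ΔH x)
      = (.id ⊗ₘ mapMiddle φ) (mapMiddle (twistTensorLeft φ)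
        ((((αB.toLinearMap ⊗ₘ ΔB) ∘ₗ ΔB) ⊗ₘ ((αH.toLinearMap ⊗ₘ ΔH) ∘ₗ ΔH)) x)) := by
    rw [map_comp, LinearMap.comp_apply, ← map_map_mapMiddle hφ_left, map_map, LinearMap.id_comp,
      smashComul_eq_mapMiddle_comp, LinearMap.comp_apply]
  have comul_left : (smashComul k φ ΔB ΔH ⊗ₘ (αB.toLinearMap ⊗ₘ αH.toLinearMap))
        (smashComul k φ ΔB ΔH x)
      = (mapMiddle φ ⊗ₘ .id) (mapMiddle (twistTensorRight φ)
        ((((ΔB ⊗ₘ αB.toLinearMap) ∘ₗ ΔB) ⊗ₘ ((ΔH ⊗ₘ αH.toLinearMap) ∘ₗ ΔH)) x)) := by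
    rw [map_comp, LinearMap.comp_apply, ← map_map_mapMiddle hφ_right, map_map, LinearMap.id_comp,
      smashComul_eq_mapMiddle_comp, LinearMap.comp_apply]
  rw [comul_right, comul_left, assoc_map_mapMiddle_twistTensorRight, map_map, hB.comul_coassoc,
    hH.comul_coassoc]

lemma map_comul_comp_eq_twistTensorLeft (hB : IsHomCoalgebra k αB ΔB εB)
    (hH : IsHomCoalgebra k αH ΔH εH)
    (hΔ : IsHomCoalgebra k (TensorProduct.congr αB αH) (smashComul k φ ΔB ΔH)
      (smashCounit k εB εH)) :
    (αH.toLinearMap ⊗ₘ ΔB) ∘ₗ φ = twistTensorLeft φ ∘ₗ (ΔB ⊗ₘ αH.toLinearMap) := by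
  obtain ⟨hΔ_map, -, hΔ_coassoc, hΔ_left, -⟩ := hΔ
  set Δ := smashComul k φ ΔB ΔH
  set α := αB.toLinearMap ⊗ₘ αH.toLinearMap
  set p : B ⊗[k] H →ₗ[k] B := rightSlice εH
  set q : B ⊗[k] H →ₗ[k] H := leftSlice εB
  have hp : (p ⊗ₘ p) ∘ₗ Δ = ΔB ∘ₗ p := map_rightSlice_rightSlice_smashComul hH
    ((leftSlice_comp_eq_rightSlice_iff hB hH).2 hΔ_left)
  have hq : q ∘ₗ α = αH.toLinearMap ∘ₗ q := LinearMap.ext fun x => by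
    rw [LinearMap.comp_apply, LinearMap.comp_apply, leftSlice_map, hB.counit_comp]
  have hqp : (q ⊗ₘ p) ∘ₗ Δ = φ ∘ₗ α :=
    LinearMap.ext (map_leftSlice_rightSlice_smashComul hB hH)
  refine LinearMap.ext fun y => ?_
  obtain ⟨x, rfl⟩ := map_surjective αB.surjective αH.surjective y
  calc (αH.toLinearMap ⊗ₘ ΔB) (φ (α x))
    _ = (αH.toLinearMap ⊗ₘ ΔB) ((q ⊗ₘ p) (Δ x)) := congrArg _ (LinearMap.congr_fun hqp x).symm
    _ = (q ⊗ₘ (p ⊗ₘ p)) ((α ⊗ₘ Δ) (Δ x)) := by rw [map_map, map_map, hp, hq]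
    _ = (q ⊗ₘ (p ⊗ₘ p)) (TensorProduct.assoc k _ _ _ ((Δ ⊗ₘ α) (Δ x))) :=
      congrArg _ (hΔ_coassoc x)
    _ = TensorProduct.assoc k H B B ((φ ⊗ₘ .id) ((.id ⊗ₘ p) ((α ⊗ₘ α) (Δ x)))) := by
      rw [map_map_assoc, map_map, map_map, map_map, hqp, LinearMap.id_comp, LinearMap.comp_id]
    _ = TensorProduct.assoc k H B B ((φ ⊗ₘ .id) ((.id ⊗ₘ p) (Δ (α x)))) :=
      congrArg _ (congrArg _ (congrArg _ (hΔ_map x).symm))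
    _ = twistTensorLeft φ ((ΔB ⊗ₘ αH.toLinearMap) (α x)) :=
      congrArg _ (congrArg _ (map_rightSlice_smashComul hH (α x)))

lemma comul_map_comp_eq_twistTensorRight (hB : IsHomCoalgebra k αB ΔB εB)
    (hH : IsHomCoalgebra k αH ΔH εH)
    (hΔ : IsHomCoalgebra k (TensorProduct.congr αB αH) (smashComul k φ ΔB ΔH)
      (smashCounit k εB εH)) :
    (ΔH ⊗ₘ αB.toLinearMap) ∘ₗ φ = twistTensorRight φ ∘ₗ (αB.toLinearMap ⊗ₘ ΔH) := by
  obtain ⟨hΔ_map, -, hΔ_coassoc, -, hΔ_right⟩ := hΔ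
  set Δ := smashComul k φ ΔB ΔH
  set α := αB.toLinearMap ⊗ₘ αH.toLinearMap
  set p : B ⊗[k] H →ₗ[k] B := rightSlice εH
  set q : B ⊗[k] H →ₗ[k] H := leftSlice εB
  have hq : (q ⊗ₘ q) ∘ₗ Δ = ΔH ∘ₗ q := map_leftSlice_leftSlice_smashComul hB
    ((rightSlice_comp_eq_leftSlice_iff hB hH).2 hΔ_right)
  have hp : p ∘ₗ α = αB.toLinearMap ∘ₗ p := LinearMap.ext fun x => by
    rw [LinearMap.comp_apply, LinearMap.comp_apply, rightSlice_map, hH.counit_comp]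
  have hqp : (q ⊗ₘ p) ∘ₗ Δ = φ ∘ₗ α :=
    LinearMap.ext (map_leftSlice_rightSlice_smashComul hB hH)
  refine LinearMap.ext fun y => ?_
  obtain ⟨x, rfl⟩ := map_surjective αB.surjective αH.surjective y
  calc (ΔH ⊗ₘ αB.toLinearMap) (φ (α x))
    _ = (ΔH ⊗ₘ αB.toLinearMap) ((q ⊗ₘ p) (Δ x)) := congrArg _ (LinearMap.congr_fun hqp x).symm
    _ = ((q ⊗ₘ q) ⊗ₘ p) ((Δ ⊗ₘ α) (Δ x)) := by rw [map_map, map_map, hq, hp]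
    _ = ((q ⊗ₘ q) ⊗ₘ p) ((TensorProduct.assoc k _ _ _).symm ((α ⊗ₘ Δ) (Δ x))) :=
      congrArg _ ((LinearEquiv.eq_symm_apply _).2 (hΔ_coassoc x).symm)
    _ = (TensorProduct.assoc k H H B).symm ((.id ⊗ₘ φ) ((q ⊗ₘ .id) ((α ⊗ₘ α) (Δ x)))) := by
      rw [map_map_assoc_symm, map_map, map_map, map_map, hqp, LinearMap.id_comp,
        LinearMap.comp_id]
    _ = (TensorProduct.assoc k H H B).symm ((.id ⊗ₘ φ) ((q ⊗ₘ .id) (Δ (α x)))) :=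
      congrArg _ (congrArg _ (congrArg _ (hΔ_map x).symm))
    _ = twistTensorRight φ ((αB.toLinearMap ⊗ₘ ΔH) (α x)) :=
      congrArg _ (congrArg _ (map_leftSlice_smashComul hB (α x)))

end SmashCoproduct

end SmashCoproduct

open SmashCoproduct

/-- `φ` is a Hom-cotwistor iff the smash coproduct `B ⊗ H` is a
Hom-coalgebra. -/
theorem isHomCotwistor_iff_smashCoproduct_isHomCoalgebra
    {B H : Type*} [AddCommGroup B] [Module k B] [AddCommGroup H] [Module k H]
    (αB : B ≃ₗ[k] B) (ΔB : B →ₗ[k] B ⊗[k] B) (εB : B →ₗ[k] k)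
    (αH : H ≃ₗ[k] H) (ΔH : H →ₗ[k] H ⊗[k] H) (εH : H →ₗ[k] k)
    (hB : IsHomCoalgebra k αB ΔB εB) (hH : IsHomCoalgebra k αH ΔH εH)
    (φ : B ⊗[k] H →ₗ[k] H ⊗[k] B)
    (hnat : φ ∘ₗ TensorProduct.map αB.toLinearMap αH.toLinearMap
          = TensorProduct.map αH.toLinearMap αB.toLinearMap ∘ₗ φ) :
    IsHomCotwistor k αB ΔB εB αH ΔH εH φ ↔
      IsHomCoalgebra k (TensorProduct.congr αB αH) (smashComul k φ ΔB ΔH)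
        (smashCounit k εB εH) := by
  constructor
  · rintro ⟨-, m1, m2, m3, m4⟩
    exact ⟨smashComul_map hB hH hnat, smashCounit_map hB hH, smashComul_coassoc hB hH m1 m2,
      (leftSlice_comp_eq_rightSlice_iff hB hH).1 m3,
      (rightSlice_comp_eq_leftSlice_iff hB hH).1 m4⟩
  · intro hΔ
    exact ⟨hnat, map_comul_comp_eq_twistTensorLeft hB hH hΔ,
      comul_map_comp_eq_twistTensorRight hB hH hΔ,
      (leftSlice_comp_eq_rightSlice_iff hB hH).2 hΔ.2.2.2.1,
      (rightSlice_comp_eq_leftSlice_iff hB hH).2 hΔ.2.2.2.2⟩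
end
end
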